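/- arXiv:1312.2153 — 2 statements merged into one kernel-verified Lean document; each statement's English description precedes it below -/
import Mathlib

section
/- For every y ∈ ℝ, lim_{n→∞} n·P(ρ_n|X| + √(1-ρ_n²)·Y > a_n·y + b_n) = 2e^{-y}. Consequently, lim_{n→∞} [P(ρ_n|X| + √(1-ρ_n²)·Y ≤ a_n·(y + ln 2) + b_n)]^n = Λ(y) = exp(-e^{-y}) for every y ∈ ℝ. -/
open MeasureTheory Filter Real Set ProbabilityTheory Topology

noncomputable def stdNormalCDF (t : ℝ) : ℝ :=
  (Real.sqrt (2 * Real.pi))⁻¹ * ∫ s in Set.Iic t, Real.exp (-(s ^ 2) / 2)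

/-!
Conditionally on the angle, `P(t < R cos θ)` at the level `t = u + s / w(u)` is concentrated near
`θ = 0`: there `R cos θ` behaves like `R (1 - θ² / 2)`, so at the scale `θ = τ / √(u w(u))` the
Gumbel condition turns the ratio with `P(u < R)` into `exp(-s - τ² / 2)`, and Laplace's method
gives a tail `P(t < X)` asymptotic to a multiple of `e⁻ˢ P(u < R) / √(u w(u))`. Dominated
convergence rests on a Potter-type bound for survival ratios.

Folding `X` to `|X|` makes `ρ |X| + √(1 - ρ²) Y` equal to `R cos(Θ - φ)`, `cos φ = ρ`, on each of
two half circles. Each half contributes the same integral as `X` itself, up to a cutoff at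
distance `arcsin ρ` from the peak. That distance is invisible as soon as `ρₙ √(bₙ / aₙ) → ∞`,
which yields the factor `2`. The constants and the factor `P(bₙ < R) / √(bₙ / aₙ)` cancel against
the definition of the quantile `bₙ`.
-/

section Squeeze

variable {ι : Type*} {p : Filter ι}

lemma tendsto_of_eventually_le_of_eventually_ge {f : ℝ → ℝ} {F : ι → ℝ → ℝ} {y : ι → ℝ} {x₀ : ℝ}
    (hf : ContinuousAt f x₀) (hF : ∀ z, Tendsto (fun i => F i z) p (𝓝 (f z)))
    (hle : ∀ z, x₀ < z → ∀ᶠ i in p, F i z ≤ y i) (hge : ∀ z < x₀, ∀ᶠ i in p, y i ≤ F i z) :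
    Tendsto y p (𝓝 (f x₀)) := by
  refine tendsto_order.2 ⟨fun a ha => ?_, fun a ha => ?_⟩
  · obtain ⟨z, haz, hz⟩ := (((hf.eventually_const_lt ha).filter_mono nhdsWithin_le_nhds).and
      (self_mem_nhdsWithin : Ioi x₀ ∈ 𝓝[>] x₀)).exists
    filter_upwards [(hF z).eventually_const_lt haz, hle z hz] with i using lt_of_lt_of_le
  · obtain ⟨z, haz, hz⟩ := (((hf.eventually_lt_const ha).filter_mono nhdsWithin_le_nhds).and
      (self_mem_nhdsWithin : Iio x₀ ∈ 𝓝[<] x₀)).exists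
    filter_upwards [(hF z).eventually_lt_const haz, hge z hz] with i h h' using h'.trans_lt h

lemma tendsto_apply_of_antitone {f : ℝ → ℝ} {F : ι → ℝ → ℝ} {x : ι → ℝ} {x₀ : ℝ}
    (hf : ContinuousAt f x₀) (hF : ∀ z, Tendsto (fun i => F i z) p (𝓝 (f z)))
    (hanti : ∀ᶠ i in p, Antitone (F i)) (hx : Tendsto x p (𝓝 x₀)) :
    Tendsto (fun i => F i (x i)) p (𝓝 (f x₀)) := by
  refine tendsto_of_eventually_le_of_eventually_ge hf hF (fun z hz => ?_) fun z hz => ?_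
  · filter_upwards [hanti, hx.eventually_lt_const hz] with i hi hxz using hi hxz.le
  · filter_upwards [hanti, hx.eventually_const_lt hz] with i hi hxz using hi hxz.le

end Squeeze

/-- The survival function `x ↦ 1 - F x` of a probability law on the line with distribution
function `F`. -/
noncomputable def survival (ν : Measure ℝ) (x : ℝ) : ℝ :=
  ν.real (Ioi x)

/-- The filter `u ↑ x_F` at the upper endpoint `x_F = sup {x | F x < 1} ∈ (-∞, ∞]` of a law. It is
built from the tails of `{x | F x < 1}`, so that finite and infinite endpoints need not be
distinguished. -/
noncomputable def upperEndpoint (ν : Measure ℝ) : Filter ℝ :=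
  map (↑) (atTop : Filter {x // 0 < survival ν x})

/-- The upper quantile `inf {x | F x > 1 - ε}`. Being a real infimum, it is meaningful only for
`0 < ε < 1`. -/
noncomputable def upperQuantile (ν : Measure ℝ) (ε : ℝ) : ℝ :=
  sInf {x | survival ν x < ε}

section Survival

variable {ν κ : Measure ℝ} [IsProbabilityMeasure ν] [IsProbabilityMeasure κ] {ε x U : ℝ}

lemma survival_nonneg (ν : Measure ℝ) (x : ℝ) : 0 ≤ survival ν x :=
  measureReal_nonneg

lemma antitone_survival (ν : Measure ℝ) [IsFiniteMeasure ν] : Antitone (survival ν) :=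
  fun _ _ hxy => measureReal_mono (Ioi_subset_Ioi hxy)

lemma survival_eq_one_sub_cdf (ν : Measure ℝ) [IsProbabilityMeasure ν] (x : ℝ) :
    survival ν x = 1 - cdf ν x := by
  rw [survival, cdf_eq_real, ← compl_Iic, probReal_compl_eq_one_sub measurableSet_Iic]

lemma survival_map {Ω : Type*} [MeasurableSpace Ω] {μ : Measure Ω} [IsProbabilityMeasure μ]
    {X : Ω → ℝ} (hX : Measurable X) (x : ℝ) :
    survival (μ.map X) x = 1 - μ.real {ω | X ω ≤ x} := by
  have := Measure.isProbabilityMeasure_map (μ := μ) hX.aemeasurable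
  rw [survival_eq_one_sub_cdf, cdf_eq_real, map_measureReal_apply hX measurableSet_Iic]
  rfl

lemma upperQuantile_map {Ω : Type*} [MeasurableSpace Ω] {μ : Measure Ω} [IsProbabilityMeasure μ]
    {X : Ω → ℝ} (hX : Measurable X) (ε : ℝ) :
    upperQuantile (μ.map X) ε = sInf {x | 1 - ε < μ.real {ω | X ω ≤ x}} := by
  simp only [upperQuantile, survival_map hX, sub_lt_comm]

lemma tendsto_survival_atTop (ν : Measure ℝ) [IsProbabilityMeasure ν] :
    Tendsto (survival ν) atTop (𝓝 0) := by
  simpa [funext (survival_eq_one_sub_cdf ν)] using (tendsto_cdf_atTop ν).const_sub 1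

lemma tendsto_survival_atBot (ν : Measure ℝ) [IsProbabilityMeasure ν] :
    Tendsto (survival ν) atBot (𝓝 1) := by
  simpa [funext (survival_eq_one_sub_cdf ν)] using (tendsto_cdf_atBot ν).const_sub 1

lemma survival_pos_of_measure_Iic_eq_zero (hx : ν (Iic x) = 0) : 0 < survival ν x := by
  rw [survival, ← compl_Iic, probReal_compl_eq_one_sub measurableSet_Iic, measureReal_def, hx]
  simp

lemma survival_lt_of_upperQuantile_lt (hε : 0 < ε) (hx : upperQuantile ν ε < x) :
    survival ν x < ε := by
  obtain ⟨z, hz⟩ := ((tendsto_survival_atTop ν).eventually_lt_const hε).exists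
  obtain ⟨z', hz', hlt⟩ := exists_lt_of_csInf_lt ⟨z, hz⟩ hx
  exact (antitone_survival ν hlt.le).trans_lt hz'

lemma le_survival_of_lt_upperQuantile (hε : ε < 1) (hx : x < upperQuantile ν ε) :
    ε ≤ survival ν x := by
  obtain ⟨z, hz⟩ := ((tendsto_survival_atBot ν).eventually_const_lt hε).exists
  have hbdd : BddBelow {x | survival ν x < ε} := by
    refine ⟨z, fun x hx => le_of_not_gt fun hxz => ?_⟩
    exact (hz.trans_le (antitone_survival ν hxz.le)).not_gt hx
  exact not_lt.1 fun hlt => notMem_of_lt_csInf (s := {x | survival ν x < ε}) hx hbdd hlt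

lemma tendsto_mul_of_tendsto_survival_upperQuantile {ι : Type*} {p : Filter ι}
    {c d ε : ι → ℝ} {f : ℝ → ℝ} (hf : ContinuousAt f 0)
    (hc : ∀ i, 0 ≤ c i) (hd : ∀ i, 0 < d i) (hε : ∀ᶠ i in p, ε i ∈ Ioo 0 1)
    (hlim : ∀ s, Tendsto (fun i => c i * survival ν (upperQuantile ν (ε i) + s / d i)) p
      (𝓝 (f s))) :
    Tendsto (fun i => c i * ε i) p (𝓝 (f 0)) := by
  refine tendsto_of_eventually_le_of_eventually_ge hf hlim (fun s hs => ?_) fun s hs => ?_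
  · filter_upwards [hε] with i hi
    exact mul_le_mul_of_nonneg_left (survival_lt_of_upperQuantile_lt hi.1
      (lt_add_of_pos_right _ (div_pos hs (hd i)))).le (hc i)
  · filter_upwards [hε] with i hi
    exact mul_le_mul_of_nonneg_left (le_survival_of_lt_upperQuantile hi.2
      (add_lt_of_neg_right _ (div_neg_of_neg_of_pos hs (hd i)))) (hc i)

instance : Nonempty {x // 0 < survival ν x} := by
  obtain ⟨x, hx⟩ := ((tendsto_survival_atBot ν).eventually_const_lt zero_lt_one).exists
  exact ⟨x, hx⟩

instance : NeBot (upperEndpoint ν) := by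
  unfold upperEndpoint
  infer_instance

instance : IsCountablyGenerated (upperEndpoint ν) := by
  have : OrdConnected {x | 0 < survival ν x} :=
    ⟨fun _ _ y hy _ hz => hy.trans_le (antitone_survival ν hz.2)⟩
  have : IsCountablyGenerated (atTop : Filter {x | 0 < survival ν x}) := inferInstance
  exact Filter.map.isCountablyGenerated _ _

lemma eventually_upperEndpoint {P : ℝ → Prop} :
    (∀ᶠ u in upperEndpoint ν, P u) ↔
      ∃ U, 0 < survival ν U ∧ ∀ u, U ≤ u → 0 < survival ν u → P u := by
  simp only [upperEndpoint, eventually_map, eventually_atTop, Subtype.forall, Subtype.exists,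
    Subtype.mk_le_mk, exists_prop]
  exact exists_congr fun U => and_congr_right fun _ => forall_congr' fun u => Imp.swap

lemma eventually_survival_pos : ∀ᶠ u in upperEndpoint ν, 0 < survival ν u := by
  obtain ⟨U, hU⟩ := (inferInstance : Nonempty {x // 0 < survival ν x})
  exact eventually_upperEndpoint.2 ⟨U, hU, fun _ _ hu => hu⟩

lemma eventually_ge_upperEndpoint (hU : 0 < survival ν U) : ∀ᶠ u in upperEndpoint ν, U ≤ u :=
  eventually_upperEndpoint.2 ⟨U, hU, fun _ hu _ => hu⟩

lemma tendsto_upperEndpoint_iff {ι : Type*} {p : Filter ι} {g : ι → ℝ} :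
    Tendsto g p (upperEndpoint ν) ↔
      (∀ U, 0 < survival ν U → ∀ᶠ i in p, U ≤ g i) ∧ ∀ᶠ i in p, 0 < survival ν (g i) := by
  refine ⟨fun hg => ⟨fun U hU => hg.eventually (eventually_ge_upperEndpoint hU),
    hg.eventually eventually_survival_pos⟩, fun ⟨hge, hpos⟩ S hS => ?_⟩
  obtain ⟨U, hU, hUS⟩ := eventually_upperEndpoint.1 hS
  rw [mem_map]
  filter_upwards [hge U hU, hpos] with i using hUS (g i)

lemma upperEndpoint_eq_atTop (h : ∀ x, 0 < survival ν x) : upperEndpoint ν = atTop := by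
  refine Filter.ext fun S => (eventually_upperEndpoint (P := (· ∈ S))).trans ?_
  simp [h]

lemma upperEndpoint_eq_nhdsLT {ν : Measure ℝ} (h : ∀ x, 0 < survival ν x ↔ x < U) :
    upperEndpoint ν = 𝓝[<] U := by
  have hset : {x | 0 < survival ν x} = Iio U := Set.ext h
  change map (Subtype.val : {x | 0 < survival ν x} → ℝ) atTop = _
  rw [hset, map_coe_Iio_atTop]

lemma exists_tendsto_survival_upperEndpoint :
    ∃ L, Tendsto (survival ν) (upperEndpoint ν) (𝓝 L) :=
  ⟨_, tendsto_map'_iff.2 (tendsto_atTop_ciInf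
    (fun _ _ hxy => antitone_survival ν hxy) ⟨0, by rintro _ ⟨x, rfl⟩; exact x.2.le⟩)⟩

lemma tendsto_upperQuantile (hle : ∀ x, survival κ x ≤ survival ν x)
    (hpos : ∀ x, 0 < survival ν x → 0 < survival κ x)
    (hν : Tendsto (survival ν) (upperEndpoint ν) (𝓝 0)) :
    Tendsto (upperQuantile κ) (𝓝[>] 0) (upperEndpoint ν) := by
  refine tendsto_upperEndpoint_iff.2 ⟨fun U hU => ?_, ?_⟩
  · filter_upwards [Ioo_mem_nhdsGT (hpos U hU)] with ε hε
    exact le_of_not_gt fun hlt => (survival_lt_of_upperQuantile_lt hε.1 hlt).not_gt hε.2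
  · filter_upwards [Ioo_mem_nhdsGT zero_lt_one] with ε hε
    obtain ⟨u, huε, hu⟩ := ((hν.eventually_lt_const hε.1).and eventually_survival_pos).exists
    have hqu : upperQuantile κ ε ≤ u := le_of_not_gt fun hlt =>
      ((hle u).trans_lt huε).not_ge (le_survival_of_lt_upperQuantile hε.2 hlt)
    exact hu.trans_le (antitone_survival ν hqu)

end Survival

/-- `ν` belongs to the Gumbel max-domain of attraction with positive scaling function `w`. -/
structure InGumbelDomain (ν : Measure ℝ) (w : ℝ → ℝ) : Prop where
  scale_pos : ∀ x, 0 < w x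
  tendsto_ratio : ∀ s, Tendsto (fun u => survival ν (u + s / w u) / survival ν u)
    (upperEndpoint ν) (𝓝 (exp (-s)))

namespace InGumbelDomain

variable {ν : Measure ℝ} [IsProbabilityMeasure ν] {w : ℝ → ℝ}

lemma antitone_survival_add_div (h : InGumbelDomain ν w) (u : ℝ) :
    Antitone fun s => survival ν (u + s / w u) := fun s t hst => by
  have := h.scale_pos u
  exact antitone_survival ν (by gcongr)

lemma tendsto_ratio_of_tendsto (h : InGumbelDomain ν w) {ι : Type*} {p : Filter ι} {u x : ι → ℝ}
    {x₀ : ℝ} (hu : Tendsto u p (upperEndpoint ν)) (hx : Tendsto x p (𝓝 x₀)) :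
    Tendsto (fun i => survival ν (u i + x i / w (u i)) / survival ν (u i)) p
      (𝓝 (exp (-x₀))) :=
  tendsto_apply_of_antitone (f := fun z => exp (-z))
    (F := fun i z => survival ν (u i + z / w (u i)) / survival ν (u i)) (by fun_prop)
    (fun z => (h.tendsto_ratio z).comp hu)
    (.of_forall fun i _ _ hst => div_le_div_of_nonneg_right
      (h.antitone_survival_add_div (u i) hst) (survival_nonneg ν _)) hx

lemma tendsto_add_one_div (h : InGumbelDomain ν w) :
    Tendsto (fun u => u + 1 / w u) (upperEndpoint ν) (upperEndpoint ν) := by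
  refine tendsto_upperEndpoint_iff.2 ⟨fun U hU => ?_, ?_⟩
  · filter_upwards [eventually_ge_upperEndpoint hU] with u hu
    exact hu.trans (le_add_of_nonneg_right (one_div_pos.2 (h.scale_pos u)).le)
  · filter_upwards [(h.tendsto_ratio 1).eventually_const_lt (exp_pos _)] with u hu
    exact (survival_nonneg ν _).lt_of_ne' (div_ne_zero_iff.1 hu.ne').1

lemma tendsto_survival (h : InGumbelDomain ν w) :
    Tendsto (survival ν) (upperEndpoint ν) (𝓝 0) := by
  obtain ⟨L, hL⟩ := exists_tendsto_survival_upperEndpoint (ν := ν)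
  have hshift : Tendsto (fun u => survival ν (u + 1 / w u)) (upperEndpoint ν)
      (𝓝 (exp (-1) * L)) := by
    refine ((h.tendsto_ratio 1).mul hL).congr' ?_
    filter_upwards [eventually_survival_pos] with u hu using div_mul_cancel₀ _ hu.ne'
  have hfix : exp (-1) * L = L := tendsto_nhds_unique hshift (hL.comp h.tendsto_add_one_div)
  have hL0 : L = 0 := (mul_left_eq_self₀.1 hfix).resolve_left (exp_lt_one_iff.2 (by norm_num)).ne
  rwa [hL0] at hL

lemma tendsto_mul_scale (h : InGumbelDomain ν w) (hν : 0 < survival ν 0) :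
    Tendsto (fun u => u * w u) (upperEndpoint ν) atTop := by
  refine tendsto_atTop.2 fun K => ?_
  have hzero : Tendsto (fun u => survival ν (u + -K / w u)) (upperEndpoint ν) (𝓝 0) := by
    have hmul := (h.tendsto_ratio (-K)).mul h.tendsto_survival
    rw [mul_zero] at hmul
    refine hmul.congr' ?_
    filter_upwards [eventually_survival_pos] with u hu using div_mul_cancel₀ _ hu.ne'
  filter_upwards [hzero.eventually_lt_const hν] with u hu
  have hpos : 0 < u + -K / w u := (antitone_survival ν).reflect_lt hu
  rw [neg_div, ← sub_eq_add_neg, sub_pos, div_lt_iff₀ (h.scale_pos u)] at hpos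
  exact hpos.le

lemma tendsto_sqrt_mul_scale (h : InGumbelDomain ν w) (hν : 0 < survival ν 0) {ι : Type*}
    {p : Filter ι} {u : ι → ℝ} (hu : Tendsto u p (upperEndpoint ν)) :
    Tendsto (fun i => √(u i * w (u i))) p atTop :=
  tendsto_sqrt_atTop.comp ((h.tendsto_mul_scale hν).comp hu)

lemma eventually_survival_add_one_div_le (h : InGumbelDomain ν w) :
    ∀ᶠ u in upperEndpoint ν, survival ν (u + 1 / w u) ≤ 2 / 5 * survival ν u := by
  have hexp : exp (-1) < 2 / 5 := by
    rw [exp_neg, inv_lt_comm₀ (exp_pos 1) (by norm_num)]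
    linarith [exp_one_gt_d9]
  filter_upwards [(h.tendsto_ratio 1).eventually_lt_const hexp, eventually_survival_pos]
    with u hlt hu
  exact ((div_lt_iff₀ hu).1 hlt).le

-- The survival function grows by a factor in `(2, 3)` over one backward step `1 / w`. If the
-- step at `u + 1 / w u` were more than twice the step at `u`, it would reach back beyond
-- `u - 1 / w u`, which forces a factor of at least `2 / (2 / 5) > 3`.
lemma eventually_one_div_scale_le (h : InGumbelDomain ν w) :
    ∀ᶠ u in upperEndpoint ν, 1 / w (u + 1 / w u) ≤ 2 / w u := by
  have hlower : ∀ᶠ u in upperEndpoint ν, 2 < survival ν (u + -1 / w u) / survival ν u :=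
    (h.tendsto_ratio (-1)).eventually_const_lt (by rw [neg_neg]; linarith [exp_one_gt_d9])
  have hupper : ∀ᶠ u in upperEndpoint ν, survival ν (u + -1 / w u) / survival ν u < 3 :=
    (h.tendsto_ratio (-1)).eventually_lt_const (by rw [neg_neg]; linarith [exp_one_lt_d9])
  filter_upwards [hlower, h.tendsto_add_one_div.eventually hupper, eventually_survival_pos,
    h.tendsto_add_one_div.eventually eventually_survival_pos,
    h.eventually_survival_add_one_div_le] with u hlo hup hu hv hstep
  rw [lt_div_iff₀ hu] at hlo
  rw [div_lt_iff₀ hv] at hup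
  have hback : u + -1 / w u < u + 1 / w u + -1 / w (u + 1 / w u) :=
    (antitone_survival ν).reflect_lt (by linarith)
  have htwo : 2 / w u = 1 / w u + 1 / w u := by ring
  rw [neg_div, neg_div] at hback
  linarith

lemma eventually_survival_add_two_pow_le (h : InGumbelDomain ν w) :
    ∀ᶠ u in upperEndpoint ν, ∀ k : ℕ,
      survival ν (u + (2 ^ k - 1) / w u) ≤ (1 / 2) ^ k * survival ν u := by
  obtain ⟨U, hU, hstep⟩ := eventually_upperEndpoint.1 (h.eventually_survival_add_one_div_le.and
    (h.eventually_one_div_scale_le.and (h.tendsto_add_one_div.eventually eventually_survival_pos)))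
  refine eventually_upperEndpoint.2 ⟨U, hU, fun u hUu hu k => ?_⟩
  induction k generalizing u with
  | zero => simp
  | succ k ih =>
    obtain ⟨hhalf, hscale, hv⟩ := hstep u hUu hu
    set v := u + 1 / w u with hvdef
    have huv : u ≤ v := le_add_of_nonneg_right (one_div_pos.2 (h.scale_pos u)).le
    have hk : (0 : ℝ) ≤ 2 ^ k - 1 := sub_nonneg.2 (one_le_pow₀ one_le_two)
    have hreach : v + (2 ^ k - 1) / w v ≤ u + (2 ^ (k + 1) - 1) / w u := calc
      v + (2 ^ k - 1) / w v = v + (2 ^ k - 1) * (1 / w v) := by ring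
      _ ≤ v + (2 ^ k - 1) * (2 / w u) := by gcongr
      _ = u + (2 ^ (k + 1) - 1) / w u := by rw [hvdef]; ring
    calc survival ν (u + (2 ^ (k + 1) - 1) / w u)
        ≤ survival ν (v + (2 ^ k - 1) / w v) := antitone_survival ν hreach
      _ ≤ (1 / 2) ^ k * survival ν v := ih v (hUu.trans huv) hv
      _ ≤ (1 / 2) ^ k * (1 / 2 * survival ν u) := by gcongr; linarith
      _ = (1 / 2) ^ (k + 1) * survival ν u := by ring

lemma eventually_survival_add_div_le (h : InGumbelDomain ν w) :
    ∀ᶠ u in upperEndpoint ν, ∀ x, 0 ≤ x →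
      survival ν (u + x / w u) ≤ 2 / (1 + x) * survival ν u := by
  filter_upwards [h.eventually_survival_add_two_pow_le] with u hu x hx
  obtain ⟨k, hk, hk'⟩ := exists_nat_pow_near (le_add_of_nonneg_right hx) (one_lt_two (α := ℝ))
  have hpow : (1 / 2 : ℝ) ^ k ≤ 2 / (1 + x) := by
    rw [le_div_iff₀ (by linarith), one_div, inv_pow, inv_mul_le_iff₀ (by positivity),
      ← pow_succ]
    exact hk'.le
  calc survival ν (u + x / w u) ≤ survival ν (u + (2 ^ k - 1) / w u) :=
        h.antitone_survival_add_div u (by linarith)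
    _ ≤ (1 / 2) ^ k * survival ν u := hu k
    _ ≤ 2 / (1 + x) * survival ν u := by gcongr; exact survival_nonneg ν u

lemma exists_eventually_survival_ratio_le (h : InGumbelDomain ν w) (s : ℝ) :
    ∃ K, 0 ≤ K ∧ ∀ᶠ u in upperEndpoint ν, ∀ x, 0 ≤ x →
      survival ν (u + (s + x) / w u) / survival ν u ≤ K / (1 + x) := by
  refine ⟨(2 + exp (-s)) * (1 + |s|), by positivity, ?_⟩
  filter_upwards [(h.tendsto_ratio s).eventually_le_const (lt_add_of_pos_left (exp (-s)) two_pos),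
    h.eventually_survival_add_div_le, eventually_survival_pos] with u hs hle hu x hx
  have hneg := neg_le_abs s
  have habs := abs_nonneg s
  have hexp := exp_pos (-s)
  rcases le_total 0 (s + x) with hsx | hsx
  · have hprod : 1 + x ≤ (1 + |s|) * (1 + (s + x)) := by nlinarith
    calc survival ν (u + (s + x) / w u) / survival ν u ≤ 2 / (1 + (s + x)) :=
          (div_le_iff₀ hu).2 (hle (s + x) hsx)
      _ ≤ 2 * (1 + |s|) / (1 + x) := by
          rw [div_le_div_iff₀ (by linarith) (by linarith)]
          linarith
      _ ≤ (2 + exp (-s)) * (1 + |s|) / (1 + x) := by gcongr; linarith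
  · calc survival ν (u + (s + x) / w u) / survival ν u ≤ survival ν (u + s / w u) / survival ν u :=
          div_le_div_of_nonneg_right (h.antitone_survival_add_div u (by linarith)) hu.le
      _ ≤ 2 + exp (-s) := hs
      _ ≤ (2 + exp (-s)) * (1 + |s|) / (1 + x) := by
          rw [le_div_iff₀ (by linarith)]
          gcongr
          linarith

end InGumbelDomain

/-- The probability `P(t < c R)` for a random variable `R` with law `ν`. -/
noncomputable def scaledTail (ν : Measure ℝ) (t c : ℝ) : ℝ :=
  ν.real {r | t < r * c}

section ScaledTail

variable {ν : Measure ℝ} {t c : ℝ}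

lemma scaledTail_nonneg (ν : Measure ℝ) (t c : ℝ) : 0 ≤ scaledTail ν t c :=
  measureReal_nonneg

lemma scaledTail_le_one (ν : Measure ℝ) [IsProbabilityMeasure ν] (t c : ℝ) :
    scaledTail ν t c ≤ 1 :=
  measureReal_le_one

lemma measurable_scaledTail (ν : Measure ℝ) [SFinite ν] (t : ℝ) : Measurable (scaledTail ν t) := by
  have hS : MeasurableSet {q : ℝ × ℝ | t < q.1 * q.2} :=
    measurableSet_lt measurable_const (by fun_prop)
  exact (measurable_measure_prodMk_right hS).ennreal_toReal

lemma intervalIntegrable_scaledTail_comp (ν : Measure ℝ) [IsProbabilityMeasure ν] (t : ℝ)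
    {g : ℝ → ℝ} (hg : Measurable g) (a b : ℝ) :
    IntervalIntegrable (fun θ => scaledTail ν t (g θ)) volume a b := by
  refine (intervalIntegrable_const (c := (1 : ℝ))).mono_fun
    ((measurable_scaledTail ν t).comp hg).aestronglyMeasurable (.of_forall fun θ => ?_)
  simpa [abs_of_nonneg (scaledTail_nonneg ν t _)] using scaledTail_le_one ν t (g θ)

lemma scaledTail_of_pos (hc : 0 < c) : scaledTail ν t c = survival ν (t / c) := by
  simp only [scaledTail, survival, Ioi, div_lt_iff₀ hc]

lemma scaledTail_of_nonpos (hν : ν (Iic 0) = 0) (ht : 0 ≤ t) (hc : c ≤ 0) :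
    scaledTail ν t c = 0 := by
  have hsub : {r | t < r * c} ⊆ Iic 0 := fun r hr =>
    not_lt.1 fun hr0 => (ht.trans_lt hr).not_ge (mul_nonpos_of_nonneg_of_nonpos hr0.le hc)
  rw [scaledTail, measureReal_def, measure_mono_null hsub hν, ENNReal.toReal_zero]

end ScaledTail

section Kernel

lemma one_sub_cos_eq_sinc (θ : ℝ) : 1 - cos θ = θ ^ 2 / 2 * sinc (θ / 2) ^ 2 := by
  rcases eq_or_ne θ 0 with rfl | hθ
  · simp
  · rw [sinc_of_ne_zero (by positivity), div_pow, sin_sq_eq_half_sub, mul_div_cancel₀ θ two_ne_zero]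
    field

lemma tendsto_mul_one_sub_cos_div_sqrt (τ : ℝ) :
    Tendsto (fun m => m * (1 - cos (τ / √m))) atTop (𝓝 (τ ^ 2 / 2)) := by
  have hsinc : Tendsto (fun m => sinc (τ / √m / 2)) atTop (𝓝 1) := by
    have harg : Tendsto (fun m => τ / √m / 2) atTop (𝓝 0) := by
      simpa using (tendsto_sqrt_atTop.const_div_atTop τ).div_const 2
    simpa [Function.comp_def] using (continuous_sinc.tendsto 0).comp harg
  have hlim := (hsinc.pow 2).const_mul (τ ^ 2 / 2)
  rw [one_pow, mul_one] at hlim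
  refine hlim.congr' ?_
  filter_upwards [eventually_gt_atTop 0] with m hm
  rw [one_sub_cos_eq_sinc, div_pow τ, sq_sqrt hm.le]
  field

lemma add_add_mul_cos_le {m s θ : ℝ} (hθ : |θ| ≤ π) (hm : 2 * |s| ≤ m) :
    (m + (s + m * (θ / π) ^ 2)) * cos θ ≤ m + s := by
  have hs := neg_le_abs s
  have hs0 := abs_nonneg s
  have hz : 0 ≤ (θ / π) ^ 2 := sq_nonneg _
  have hcos : cos θ ≤ 1 - 2 * (θ / π) ^ 2 := by
    refine (cos_le_one_sub_mul_cos_sq hθ).trans_eq ?_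
    ring
  have hmz : 0 ≤ m * (θ / π) ^ 2 := mul_nonneg (by linarith) hz
  calc (m + (s + m * (θ / π) ^ 2)) * cos θ
      ≤ (m + (s + m * (θ / π) ^ 2)) * (1 - 2 * (θ / π) ^ 2) :=
        mul_le_mul_of_nonneg_left hcos (by linarith [hmz])
    _ = m + s - (m + 2 * s + 2 * m * (θ / π) ^ 2) * (θ / π) ^ 2 := by ring
    _ ≤ m + s := sub_le_self _ (mul_nonneg (by linarith [hmz]) hz)

lemma integral_exp_neg_add_sq_div_two (s : ℝ) :
    ∫ τ, exp (-(s + τ ^ 2 / 2)) = √(2 * π) * exp (-s) := by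
  have hsplit : ∀ τ : ℝ, exp (-(s + τ ^ 2 / 2)) = exp (-s) * exp (-(1 / 2) * τ ^ 2) := fun τ => by
    rw [← exp_add]
    ring_nf
  simp_rw [hsplit]
  rw [integral_const_mul, integral_gaussian, mul_comm, div_div_eq_mul_div, div_one, mul_comm π]

lemma integral_indicator_comp_div (f : ℝ → ℝ) {a b r : ℝ} (hab : a ≤ b) (hr : 0 < r) :
    ∫ τ, (Ioc (a * r) (b * r)).indicator (fun τ => f (τ / r)) τ = r * ∫ θ in a..b, f θ := by
  rw [integral_indicator measurableSet_Ioc, ← intervalIntegral.integral_of_le (by gcongr),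
    intervalIntegral.integral_comp_div f hr.ne', mul_div_cancel_right₀ _ hr.ne',
    mul_div_cancel_right₀ _ hr.ne', smul_eq_mul]

end Kernel

namespace InGumbelDomain

variable {ν : Measure ℝ} [IsProbabilityMeasure ν] {w : ℝ → ℝ}

lemma exists_eventually_scaledTail_cos_ratio_le (h : InGumbelDomain ν w) (hν : ν (Iic 0) = 0)
    (s : ℝ) : ∃ K, 0 ≤ K ∧ ∀ᶠ u in upperEndpoint ν, ∀ θ, |θ| ≤ π →
      scaledTail ν (u + s / w u) (cos θ) / survival ν u ≤
        K / (1 + (√(u * w u) * θ / π) ^ 2) := by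
  obtain ⟨K, hK, hle⟩ := h.exists_eventually_survival_ratio_le s
  have hm := h.tendsto_mul_scale (survival_pos_of_measure_Iic_eq_zero hν)
  refine ⟨K, hK, ?_⟩
  filter_upwards [hle, hm.eventually_ge_atTop (2 * |s|)] with u hu hms θ hθ
  have hw := h.scale_pos u
  have hmul : u + s / w u = (u * w u + s) / w u := by field
  have hsum : 0 ≤ u * w u + s := by linarith [neg_le_abs s, abs_nonneg s]
  have hsq : (√(u * w u) * θ / π) ^ 2 = u * w u * (θ / π) ^ 2 := by
    rw [mul_div_assoc, mul_pow, sq_sqrt (by linarith [abs_nonneg s])]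
  rcases le_or_gt (cos θ) 0 with hcos | hcos
  · rw [scaledTail_of_nonpos hν (hmul ▸ div_nonneg hsum hw.le) hcos, zero_div]
    positivity
  · rw [scaledTail_of_pos hcos]
    refine le_trans ?_ (hu _ (sq_nonneg _))
    refine div_le_div_of_nonneg_right (antitone_survival ν ?_) (survival_nonneg ν u)
    rw [hsq, hmul, le_div_iff₀ hcos, le_div_iff₀ hw]
    refine le_of_eq_of_le ?_ (add_add_mul_cos_le hθ hms)
    field

section Laplace

variable {ι : Type*} {p : Filter ι} {u α β : ι → ℝ}

lemma tendsto_scaledTail_cos_ratio (h : InGumbelDomain ν w) (hu : Tendsto u p (upperEndpoint ν))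
    (hm : Tendsto (fun i => u i * w (u i)) p atTop) (s τ : ℝ) :
    Tendsto (fun i => scaledTail ν (u i + s / w (u i)) (cos (τ / √(u i * w (u i)))) /
      survival ν (u i)) p (𝓝 (exp (-(s + τ ^ 2 / 2)))) := by
  have hangle : Tendsto (fun i => τ / √(u i * w (u i))) p (𝓝 0) :=
    (tendsto_sqrt_atTop.comp hm).const_div_atTop τ
  have hcos : Tendsto (fun i => cos (τ / √(u i * w (u i)))) p (𝓝 1) := by
    simpa [Function.comp_def] using (continuous_cos.tendsto 0).comp hangle
  have hshift : Tendsto (fun i => (s + u i * w (u i) * (1 - cos (τ / √(u i * w (u i))))) /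
      cos (τ / √(u i * w (u i)))) p (𝓝 (s + τ ^ 2 / 2)) := by
    simpa [Pi.div_def] using
      (((tendsto_mul_one_sub_cos_div_sqrt τ).comp hm).const_add s).div hcos one_ne_zero
  refine (h.tendsto_ratio_of_tendsto hu hshift).congr' ?_
  filter_upwards [hcos.eventually_const_lt zero_lt_one] with i hi
  have hw := h.scale_pos (u i)
  rw [scaledTail_of_pos hi]
  congr 2
  field

lemma tendsto_integral_scaledTail_cos [IsCountablyGenerated p] (h : InGumbelDomain ν w)
    (hν : ν (Iic 0) = 0) (hu : Tendsto u p (upperEndpoint ν))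
    (hα : ∀ᶠ i in p, -π ≤ α i) (hβ : ∀ᶠ i in p, β i ≤ π)
    (hαbot : Tendsto (fun i => α i * √(u i * w (u i))) p atBot)
    (hβtop : Tendsto (fun i => β i * √(u i * w (u i))) p atTop) (s : ℝ) :
    Tendsto (fun i => √(u i * w (u i)) / survival ν (u i) *
      ∫ θ in α i..β i, scaledTail ν (u i + s / w (u i)) (cos θ)) p
      (𝓝 (√(2 * π) * exp (-s))) := by
  have hm := (h.tendsto_mul_scale (survival_pos_of_measure_Iic_eq_zero hν)).comp hu
  have hr := (h.tendsto_sqrt_mul_scale (survival_pos_of_measure_Iic_eq_zero hν) hu)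
    |>.eventually_gt_atTop 0
  obtain ⟨K, hK, hdom⟩ := h.exists_eventually_scaledTail_cos_ratio_le hν s
  let f i := (Ioc (α i * √(u i * w (u i))) (β i * √(u i * w (u i)))).indicator
    fun τ => scaledTail ν (u i + s / w (u i)) (cos (τ / √(u i * w (u i)))) / survival ν (u i)
  rw [← integral_exp_neg_add_sq_div_two]
  suffices Tendsto (fun i => ∫ τ, f i τ) p (𝓝 (∫ τ, exp (-(s + τ ^ 2 / 2)))) by
    refine this.congr' ?_
    filter_upwards [hr, hαbot.eventually_le_atBot 0, hβtop.eventually_ge_atTop 0]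
      with i hri hαi hβi
    rw [div_mul_eq_mul_div, mul_div_assoc, ← intervalIntegral.integral_div]
    exact integral_indicator_comp_div
      (fun θ => scaledTail ν (u i + s / w (u i)) (cos θ) / survival ν (u i))
      (le_of_mul_le_mul_right (hαi.trans hβi) hri) hri
  refine tendsto_integral_filter_of_dominated_convergence (fun τ => K * (1 + (τ / π) ^ 2)⁻¹)
    (.of_forall fun i => ?_) ?_ ?_ (.of_forall fun τ => ?_)
  · refine Measurable.aestronglyMeasurable (Measurable.indicator ?_ measurableSet_Ioc)
    exact ((measurable_scaledTail ν _).comp (by fun_prop)).div_const _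
  · filter_upwards [hr, hu.eventually hdom, hα, hβ] with i hri hdomi hαi hβi
    refine .of_forall fun τ => ?_
    rw [norm_indicator_eq_indicator_norm]
    refine indicator_apply_le' (fun hτ => ?_) fun _ => by positivity
    have hθ : |τ / √(u i * w (u i))| ≤ π := by
      rw [abs_le, le_div_iff₀ hri, div_le_iff₀ hri]
      exact ⟨(mul_le_mul_of_nonneg_right hαi hri.le).trans hτ.1.le,
        hτ.2.trans (mul_le_mul_of_nonneg_right hβi hri.le)⟩
    rw [norm_of_nonneg (div_nonneg (scaledTail_nonneg ν _ _) (survival_nonneg ν _)),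
      ← div_eq_mul_inv]
    simpa only [mul_div_cancel₀ τ hri.ne'] using hdomi _ hθ
  · exact (integrable_inv_one_add_sq.comp_div pi_ne_zero).const_mul K
  · refine (h.tendsto_scaledTail_cos_ratio hu hm s τ).congr' ?_
    filter_upwards [hαbot.eventually_lt_atBot τ, hβtop.eventually_ge_atTop τ] with i hαi hβi
    have hτ : τ ∈ Ioc (α i * √(u i * w (u i))) (β i * √(u i * w (u i))) := ⟨hαi, hβi⟩
    simp only [f, indicator_of_mem hτ]

end Laplace

end InGumbelDomain

section AngularIntegration

lemma measureReal_prodMk_mem_eq_integral {Ω E F : Type*} [MeasurableSpace Ω] [MeasurableSpace E]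
    [MeasurableSpace F] {μ : Measure Ω} [IsFiniteMeasure μ] {R : Ω → E} {Θ : Ω → F}
    (hR : Measurable R) (hΘ : Measurable Θ) (hindep : IndepFun R Θ μ) {S : Set (E × F)}
    (hS : MeasurableSet S) :
    μ.real {ω | (R ω, Θ ω) ∈ S} = ∫ θ, (μ.map R).real {r | (r, θ) ∈ S} ∂(μ.map Θ) := by
  have hprod : μ {ω | (R ω, Θ ω) ∈ S} = ((μ.map R).prod (μ.map Θ)) S := by
    rw [← (indepFun_iff_map_prod_eq_prod_map_map hR.aemeasurable hΘ.aemeasurable).1 hindep,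
      Measure.map_apply (hR.prodMk hΘ) hS]
    rfl
  rw [measureReal_def, hprod, Measure.prod_apply_symm hS, ← integral_toReal
    (measurable_measure_prodMk_right hS).aemeasurable (.of_forall fun _ => measure_lt_top _ _)]
  rfl

lemma integral_eq_two_mul_integral_of_comp_pi_sub {g : ℝ → ℝ} (hper : Function.Periodic g (2 * π))
    (hsymm : ∀ θ, g (π - θ) = g θ) (hint : IntervalIntegrable g volume (-(π / 2)) (π / 2)) :
    ∫ θ in -π..π, g θ = 2 * ∫ θ in -(π / 2)..π / 2, g θ := by
  have hint' : IntervalIntegrable g volume (π / 2) (3 * π / 2) := by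
    have := (hint.comp_sub_left π).symm
    simp only [hsymm] at this
    convert this using 1 <;> ring
  have hreflect : ∫ θ in π / 2..3 * π / 2, g θ = ∫ θ in -(π / 2)..π / 2, g θ := by
    have := intervalIntegral.integral_comp_sub_left (a := -(π / 2)) (b := π / 2) g π
    simp only [hsymm] at this
    rw [this]
    congr 1 <;> ring
  have hshift : ∫ θ in -π..π, g θ = ∫ θ in -(π / 2)..3 * π / 2, g θ := by
    convert hper.intervalIntegral_add_eq (-π) (-(π / 2)) using 2 <;> ring
  rw [hshift, ← intervalIntegral.integral_add_adjacent_intervals hint hint', hreflect, two_mul]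

lemma integral_comp_cos_mul_abs_cos_add_sin_mul_sin {f : ℝ → ℝ} (φ : ℝ)
    (hf : IntervalIntegrable (fun θ => f (cos θ)) volume (-(π / 2) - φ) (π / 2 - φ)) :
    ∫ θ in -π..π, f (cos φ * |cos θ| + sin φ * sin θ) =
      2 * ∫ θ in -(π / 2) - φ..π / 2 - φ, f (cos θ) := by
  have hcos : EqOn (fun θ => f (cos (θ - φ))) (fun θ => f (cos φ * |cos θ| + sin φ * sin θ))
      (uIcc (-(π / 2)) (π / 2)) := fun θ hθ => by
    rw [uIcc_of_le (by linarith [pi_pos])] at hθ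
    simp only [cos_sub, abs_of_nonneg (cos_nonneg_of_mem_Icc hθ), mul_comm]
  have hint : IntervalIntegrable (fun θ => f (cos φ * |cos θ| + sin φ * sin θ)) volume
      (-(π / 2)) (π / 2) := by
    refine IntervalIntegrable.congr (hcos.mono uIoc_subset_uIcc) ?_
    simpa using hf.comp_sub_right φ
  rw [integral_eq_two_mul_integral_of_comp_pi_sub (fun θ => by simp) (fun θ => by simp) hint,
    ← intervalIntegral.integral_congr hcos,
    intervalIntegral.integral_comp_sub_right (fun θ => f (cos θ)) φ]

end AngularIntegration

/-- `R` and `Θ` are polar coordinates of a spherically symmetric random vector in the plane: an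
almost surely positive radius and an independent angle, uniform on `(-π, π)`. -/
structure IsPolarPair {Ω : Type*} [MeasurableSpace Ω] (μ : Measure Ω) (R Θ : Ω → ℝ) : Prop where
  measurable_radius : Measurable R
  measurable_angle : Measurable Θ
  radius_pos : ∀ᵐ ω ∂μ, 0 < R ω
  map_angle : μ.map Θ = (ENNReal.ofReal (2 * π))⁻¹ • volume.restrict (Ioo (-π) π)
  indepFun : IndepFun R Θ μ

namespace IsPolarPair

variable {Ω : Type*} [MeasurableSpace Ω] {μ : Measure Ω} {R Θ : Ω → ℝ}

lemma map_radius_Iic_zero (hp : IsPolarPair μ R Θ) : μ.map R (Iic 0) = 0 := by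
  rw [Measure.map_apply hp.measurable_radius measurableSet_Iic]
  exact measure_mono_null (fun _ hω => not_lt.2 (mem_Iic.1 hω)) (ae_iff.1 hp.radius_pos)

lemma measurable_radius_mul_cos (hp : IsPolarPair μ R Θ) :
    Measurable fun ω => R ω * cos (Θ ω) :=
  hp.measurable_radius.mul (measurable_cos.comp hp.measurable_angle)

variable [IsProbabilityMeasure μ]

lemma isProbabilityMeasure_map_radius (hp : IsPolarPair μ R Θ) :
    IsProbabilityMeasure (μ.map R) :=
  Measure.isProbabilityMeasure_map hp.measurable_radius.aemeasurable

lemma isProbabilityMeasure_map_radius_mul_cos (hp : IsPolarPair μ R Θ) :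
    IsProbabilityMeasure (μ.map fun ω => R ω * cos (Θ ω)) :=
  Measure.isProbabilityMeasure_map hp.measurable_radius_mul_cos.aemeasurable

lemma survival_map_radius_zero_pos (hp : IsPolarPair μ R Θ) : 0 < survival (μ.map R) 0 :=
  have := hp.isProbabilityMeasure_map_radius
  survival_pos_of_measure_Iic_eq_zero hp.map_radius_Iic_zero

lemma measureReal_lt_radius_mul (hp : IsPolarPair μ R Θ) {g : ℝ → ℝ} (hg : Measurable g) (t : ℝ) :
    μ.real {ω | t < R ω * g (Θ ω)} =
      (2 * π)⁻¹ * ∫ θ in -π..π, scaledTail (μ.map R) t (g θ) := by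
  have hS : MeasurableSet {q : ℝ × ℝ | t < q.1 * g q.2} :=
    measurableSet_lt measurable_const (measurable_fst.mul (hg.comp measurable_snd))
  refine (measureReal_prodMk_mem_eq_integral hp.measurable_radius hp.measurable_angle
    hp.indepFun hS).trans ?_
  rw [hp.map_angle, integral_smul_measure, ENNReal.toReal_inv,
    ENNReal.toReal_ofReal two_pi_pos.le, ← integral_Ioc_eq_integral_Ioo,
    ← intervalIntegral.integral_of_le (by linarith [pi_pos]), smul_eq_mul]
  rfl

lemma survival_map_radius_mul_cos (hp : IsPolarPair μ R Θ) (t : ℝ) :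
    survival (μ.map fun ω => R ω * cos (Θ ω)) t =
      (2 * π)⁻¹ * ∫ θ in -π..π, scaledTail (μ.map R) t (cos θ) := by
  rw [← hp.measureReal_lt_radius_mul measurable_cos, survival,
    map_measureReal_apply hp.measurable_radius_mul_cos measurableSet_Ioi]
  rfl

lemma survival_map_radius_mul_cos_le (hp : IsPolarPair μ R Θ) (x : ℝ) :
    survival (μ.map fun ω => R ω * cos (Θ ω)) x ≤ survival (μ.map R) x := by
  rw [survival, survival, map_measureReal_apply hp.measurable_radius_mul_cos measurableSet_Ioi,
    map_measureReal_apply hp.measurable_radius measurableSet_Ioi]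
  refine ENNReal.toReal_mono (measure_ne_top μ _) (measure_mono_ae ?_)
  filter_upwards [hp.radius_pos] with ω hω hx
  exact lt_of_lt_of_le hx (mul_le_of_le_one_right hω.le (cos_le_one _))

-- Folding `X ↦ |X|` puts the vector into a half plane, on which the linear form is `R cos(Θ - φ)`
-- with `cos φ = ρ`.
lemma measureReal_lt_mul_abs_add (hp : IsPolarPair μ R Θ) {ρ : ℝ} (hρ : ρ ∈ Icc (-1) 1) (t : ℝ) :
    μ.real {ω | t < ρ * |R ω * cos (Θ ω)| + √(1 - ρ ^ 2) * (R ω * sin (Θ ω))} =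
      π⁻¹ * ∫ θ in -(π / 2) - arccos ρ..arcsin ρ, scaledTail (μ.map R) t (cos θ) := by
  have := hp.isProbabilityMeasure_map_radius
  have hpolar : μ.real {ω | t < ρ * |R ω * cos (Θ ω)| + √(1 - ρ ^ 2) * (R ω * sin (Θ ω))} =
      μ.real {ω | t < R ω *
        (cos (arccos ρ) * |cos (Θ ω)| + sin (arccos ρ) * sin (Θ ω))} := by
    refine measureReal_congr (eventuallyEq_set.2 ?_)
    filter_upwards [hp.radius_pos] with ω hω
    rw [abs_mul, abs_of_pos hω, cos_arccos hρ.1 hρ.2, sin_arccos]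
    ring_nf
  rw [hpolar, hp.measureReal_lt_radius_mul
      (g := fun θ => cos (arccos ρ) * |cos θ| + sin (arccos ρ) * sin θ) (by fun_prop),
    integral_comp_cos_mul_abs_cos_add_sin_mul_sin _
      (intervalIntegrable_scaledTail_comp _ t measurable_cos _ _),
    arcsin_eq_pi_div_two_sub_arccos]
  ring

section Asymptotics

variable {w : ℝ → ℝ} {ι : Type*} {p : Filter ι} [IsCountablyGenerated p] {u ρ : ι → ℝ}

lemma tendsto_survival_map_radius_mul_cos (hp : IsPolarPair μ R Θ)
    (h : InGumbelDomain (μ.map R) w) (hu : Tendsto u p (upperEndpoint (μ.map R))) (s : ℝ) :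
    Tendsto (fun i => √(u i * w (u i)) / survival (μ.map R) (u i) *
      survival (μ.map fun ω => R ω * cos (Θ ω)) (u i + s / w (u i))) p
      (𝓝 ((√(2 * π))⁻¹ * exp (-s))) := by
  have := hp.isProbabilityMeasure_map_radius
  have hsqrt := h.tendsto_sqrt_mul_scale hp.survival_map_radius_zero_pos hu
  have hlim := (h.tendsto_integral_scaledTail_cos hp.map_radius_Iic_zero hu
    (.of_forall fun _ => le_rfl) (.of_forall fun _ => le_rfl)
    (hsqrt.const_mul_atTop_of_neg (neg_lt_zero.2 pi_pos))
    (hsqrt.const_mul_atTop pi_pos) s).const_mul (2 * π)⁻¹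
  rw [← mul_assoc, inv_mul_eq_div, sqrt_div_self] at hlim
  refine hlim.congr fun i => ?_
  rw [hp.survival_map_radius_mul_cos]
  ring

lemma tendsto_measureReal_lt_mul_abs_add (hp : IsPolarPair μ R Θ)
    (h : InGumbelDomain (μ.map R) w) (hu : Tendsto u p (upperEndpoint (μ.map R)))
    (hρ : ∀ i, ρ i ≤ 1) (hρu : Tendsto (fun i => ρ i * √(u i * w (u i))) p atTop) (s : ℝ) :
    Tendsto (fun i => √(u i * w (u i)) / survival (μ.map R) (u i) *
      μ.real {ω | u i + s / w (u i) <
        ρ i * |R ω * cos (Θ ω)| + √(1 - ρ i ^ 2) * (R ω * sin (Θ ω))}) p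
      (𝓝 (2 * ((√(2 * π))⁻¹ * exp (-s)))) := by
  have := hp.isProbabilityMeasure_map_radius
  have hsqrt := h.tendsto_sqrt_mul_scale hp.survival_map_radius_zero_pos hu
  have hρ0 : ∀ᶠ i in p, 0 < ρ i := by
    filter_upwards [hρu.eventually_gt_atTop 0] with i hi
    exact pos_of_mul_pos_left hi (sqrt_nonneg _)
  have hleft : Tendsto (fun i => (-(π / 2) - arccos (ρ i)) * √(u i * w (u i))) p atBot := by
    refine tendsto_atBot_mono (fun i => ?_)
      (hsqrt.const_mul_atTop_of_neg (neg_lt_zero.2 pi_div_two_pos))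
    exact mul_le_mul_of_nonneg_right (by linarith [arccos_nonneg (ρ i)]) (sqrt_nonneg _)
  have hright : Tendsto (fun i => arcsin (ρ i) * √(u i * w (u i))) p atTop := by
    refine tendsto_atTop_mono' p ?_ hρu
    filter_upwards [hρ0] with i hi
    have hle := sin_le (arcsin_nonneg.2 hi.le)
    rw [sin_arcsin (by linarith) (hρ i)] at hle
    exact mul_le_mul_of_nonneg_right hle (sqrt_nonneg _)
  have hlim := (h.tendsto_integral_scaledTail_cos hp.map_radius_Iic_zero hu
    (hρ0.mono fun i hi => by linarith [arccos_le_pi_div_two.2 hi.le])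
    (.of_forall fun i => by linarith [arcsin_le_pi_div_two (ρ i), pi_pos])
    hleft hright s).const_mul π⁻¹
  have hconst : π⁻¹ * (√(2 * π) * exp (-s)) = 2 * ((√(2 * π))⁻¹ * exp (-s)) := by
    rw [← sqrt_div_self (x := 2 * π)]
    field
  rw [hconst] at hlim
  refine hlim.congr' ?_
  filter_upwards [hρ0] with i hi
  rw [hp.measureReal_lt_mul_abs_add ⟨by linarith, hρ i⟩]
  ring

end Asymptotics

lemma survival_map_radius_mul_cos_pos (hp : IsPolarPair μ R Θ)
    {w : ℝ → ℝ} (h : InGumbelDomain (μ.map R) w) {x : ℝ} (hx : 0 < survival (μ.map R) x) :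
    0 < survival (μ.map fun ω => R ω * cos (Θ ω)) x := by
  have := hp.isProbabilityMeasure_map_radius
  have := hp.isProbabilityMeasure_map_radius_mul_cos
  have hev := (hp.tendsto_survival_map_radius_mul_cos h tendsto_id 0).eventually_const_lt
    (by positivity : 0 < (√(2 * π))⁻¹ * exp (-0))
  obtain ⟨u, hu, hxu⟩ := (hev.and (eventually_ge_upperEndpoint hx)).exists
  have hne := (mul_ne_zero_iff.1 hu.ne').2
  simp only [id_eq, zero_div, add_zero] at hne
  exact ((survival_nonneg _ u).lt_of_ne' hne).trans_le (antitone_survival _ hxu)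

lemma tendsto_upperQuantile_radius_mul_cos (hp : IsPolarPair μ R Θ)
    {w : ℝ → ℝ} (h : InGumbelDomain (μ.map R) w) :
    Tendsto (fun n : ℕ => upperQuantile (μ.map fun ω => R ω * cos (Θ ω)) (1 / n)) atTop
      (upperEndpoint (μ.map R)) := by
  have := hp.isProbabilityMeasure_map_radius
  have := hp.isProbabilityMeasure_map_radius_mul_cos
  refine (tendsto_upperQuantile hp.survival_map_radius_mul_cos_le
    (fun _ => hp.survival_map_radius_mul_cos_pos h) h.tendsto_survival).comp ?_
  simp only [one_div]
  exact tendsto_inv_atTop_nhdsGT_zero.comp tendsto_natCast_atTop_atTop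

lemma tendsto_natCast_mul_measureReal (hp : IsPolarPair μ R Θ)
    {w : ℝ → ℝ} {b ρ : ℕ → ℝ} (h : InGumbelDomain (μ.map R) w)
    (hb : ∀ n : ℕ, b n = upperQuantile (μ.map fun ω => R ω * cos (Θ ω)) (1 / n))
    (hρ : ∀ n, ρ n ≤ 1) (hρb : Tendsto (fun n => ρ n * √(b n * w (b n))) atTop atTop) (y : ℝ) :
    Tendsto (fun n : ℕ => n * μ.real {ω | b n + y / w (b n) <
      ρ n * |R ω * cos (Θ ω)| + √(1 - ρ n ^ 2) * (R ω * sin (Θ ω))}) atTop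
      (𝓝 (2 * exp (-y))) := by
  have := hp.isProbabilityMeasure_map_radius_mul_cos
  have hbend := hp.tendsto_upperQuantile_radius_mul_cos h
  simp only [← hb] at hbend
  set c : ℕ → ℝ := fun n => √(b n * w (b n)) / survival (μ.map R) (b n)
  have hc : Tendsto (fun n => c n * (1 / n)) atTop (𝓝 ((√(2 * π))⁻¹ * exp (-0))) := by
    refine tendsto_mul_of_tendsto_survival_upperQuantile
      (ν := μ.map fun ω => R ω * cos (Θ ω)) (f := fun s => (√(2 * π))⁻¹ * exp (-s))
      (by fun_prop) (fun n => div_nonneg (sqrt_nonneg _) (survival_nonneg _ _))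
      (fun n => h.scale_pos (b n)) ?_ fun s => ?_
    · filter_upwards [eventually_gt_atTop 1] with n hn
      have : (1 : ℝ) < n := Nat.one_lt_cast.2 hn
      exact ⟨by positivity, (div_lt_one (by positivity)).2 this⟩
    · simpa only [← hb] using hp.tendsto_survival_map_radius_mul_cos h hbend s
  have hratio := (hp.tendsto_measureReal_lt_mul_abs_add h hbend hρ hρb y).div hc
    (by positivity)
  have hconst : 2 * ((√(2 * π))⁻¹ * exp (-y)) / ((√(2 * π))⁻¹ * exp (-0)) = 2 * exp (-y) := by
    rw [neg_zero, exp_zero]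
    field
  rw [hconst] at hratio
  refine hratio.congr' ?_
  filter_upwards [hc.eventually_ne (by positivity)] with n hn
  refine (mul_div_mul_left _ _ (left_ne_zero_of_mul hn)).trans ?_
  rw [div_div_eq_mul_div, div_one, mul_comm]

end IsPolarPair

lemma tendsto_measureReal_le_pow {Ω : Type*} [MeasurableSpace Ω] {μ : Measure Ω}
    [IsProbabilityMeasure μ] {Z : ℕ → Ω → ℝ} {t : ℕ → ℝ} {τ : ℝ} (hZ : ∀ n, Measurable (Z n))
    (hτ : Tendsto (fun n : ℕ => n * μ.real {ω | t n < Z n ω}) atTop (𝓝 τ)) :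
    Tendsto (fun n => μ.real {ω | Z n ω ≤ t n} ^ n) atTop (𝓝 (exp (-τ))) := by
  have hcompl : ∀ n, μ.real {ω | Z n ω ≤ t n} = 1 + -μ.real {ω | t n < Z n ω} := fun n => by
    rw [← sub_eq_add_neg, ← probReal_compl_eq_one_sub (measurableSet_lt measurable_const (hZ n))]
    simp only [compl_ofPred, not_lt]
  simp only [hcompl]
  exact tendsto_one_add_pow_exp_of_tendsto (by simpa only [mul_neg] using hτ.neg)

lemma tendsto_mul_sqrt_atTop_of_tendsto_one_sub_mul {ι : Type*} {p : Filter ι} {m ρ : ι → ℝ}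
    {C : ℝ} (hm : Tendsto m p atTop) (hρ : Tendsto (fun i => (1 - ρ i) * m i) p (𝓝 C)) :
    Tendsto (fun i => ρ i * √(m i)) p atTop := by
  have hone : Tendsto ρ p (𝓝 1) := by
    have hlim := (hρ.div_atTop hm).const_sub 1
    rw [sub_zero] at hlim
    refine hlim.congr' ?_
    filter_upwards [hm.eventually_gt_atTop 0] with i hi
    rw [mul_div_cancel_right₀ _ hi.ne', sub_sub_cancel]
  exact hone.pos_mul_atTop one_pos (tendsto_sqrt_atTop.comp hm)

theorem maxima_half_skew_gumbel_marginal_general {Ω : Type*} [MeasurableSpace Ω] {μ : Measure Ω}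
    [IsProbabilityMeasure μ] {R Θ X Y : Ω → ℝ} {w : ℝ → ℝ} {a b ρ : ℕ → ℝ}
    (hp : IsPolarPair μ R Θ) (hX : X = fun ω => R ω * cos (Θ ω))
    (hY : Y = fun ω => R ω * sin (Θ ω)) (hR : InGumbelDomain (μ.map R) w)
    (hb : ∀ n : ℕ, b n = upperQuantile (μ.map X) (1 / n)) (ha : ∀ n, a n = 1 / w (b n))
    (hρ : ∀ n, ρ n ≤ 1) (hρb : Tendsto (fun n => ρ n * √(b n / a n)) atTop atTop) (y : ℝ) :
    Tendsto (fun n : ℕ => n *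
        μ.real {ω | a n * y + b n < ρ n * |X ω| + √(1 - ρ n ^ 2) * Y ω})
      atTop (𝓝 (2 * exp (-y))) ∧
    Tendsto (fun n =>
        μ.real {ω | ρ n * |X ω| + √(1 - ρ n ^ 2) * Y ω ≤ a n * (y + log 2) + b n} ^ n)
      atTop (𝓝 (exp (-exp (-y)))) := by
  subst hX hY
  have hscale : ∀ n z, a n * z + b n = b n + z / w (b n) := fun n z => by rw [ha]; ring
  have htail := hp.tendsto_natCast_mul_measureReal hR hb hρ
    (by simpa only [ha, div_div_eq_mul_div, div_one] using hρb)
  simp only [hscale]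
  refine ⟨htail y, ?_⟩
  have hlog : 2 * exp (-(y + log 2)) = exp (-y) := by
    rw [neg_add, exp_add, exp_neg (log 2), exp_log two_pos]
    ring
  rw [← hlog]
  have := hp.measurable_radius
  have := hp.measurable_angle
  exact tendsto_measureReal_le_pow (fun n => by fun_prop) (htail (y + log 2))

theorem maxima_half_skew_gumbel_marginal
{Ω : Type*} [MeasurableSpace Ω] (μ : Measure Ω) [IsProbabilityMeasure μ]
    (R Θ : Ω → ℝ) (hRm : Measurable R) (hΘm : Measurable Θ)
    (hRpos : ∀ᵐ ω ∂μ, 0 < R ω)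
    (hΘunif : μ.map Θ = (ENNReal.ofReal (2 * π))⁻¹ • volume.restrict (Ioo (-π) π))
    (hindep : IndepFun R Θ μ)
    (X Y : Ω → ℝ)
    (hX : X = fun ω => R ω * Real.cos (Θ ω))
    (hY : Y = fun ω => R ω * Real.sin (Θ ω))
    (F G : ℝ → ℝ)
    (hF : F = fun x => (μ {ω | R ω ≤ x}).toReal)
    (hG : G = fun x => (μ {ω | X ω ≤ x}).toReal)
    (w : ℝ → ℝ) (hw : ∀ x, 0 < w x)
    (l : Filter ℝ)
    (hendpoint : (l = atTop ∧ ∀ x, F x < 1) ∨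
      (l = nhdsWithin 1 (Iio 1) ∧ (∀ x < 1, F x < 1) ∧ ∀ x, 1 ≤ x → F x = 1))
    (hGumbel : ∀ s : ℝ,
      Tendsto (fun u => (1 - F (u + s / w u)) / (1 - F u)) l (𝓝 (Real.exp (-s))))
    (b a : ℕ → ℝ)
    (hb : ∀ n : ℕ, b n = sInf {x | 1 - 1 / (n : ℝ) < G x})
    (ha : ∀ n : ℕ, a n = 1 / w (b n))
    (ρ : ℕ → ℝ) (hρ : ∀ n, ρ n ∈ Ioc (0 : ℝ) 1)
    (lam : ℝ) (hlam : 0 ≤ lam)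
    (hHR : Tendsto (fun n : ℕ => (1 - ρ n) * b n / a n) atTop (𝓝 (2 * lam ^ 2))) :
    ∀ y : ℝ,
      Tendsto (fun n : ℕ =>
          (n : ℝ) * (μ {ω | a n * y + b n <
            ρ n * |X ω| + Real.sqrt (1 - ρ n ^ 2) * Y ω}).toReal)
        atTop (𝓝 (2 * Real.exp (-y))) ∧
      Tendsto (fun n : ℕ =>
          ((μ {ω | ρ n * |X ω| + Real.sqrt (1 - ρ n ^ 2) * Y ω ≤
            a n * (y + Real.log 2) + b n}).toReal) ^ n)
        atTop (𝓝 (Real.exp (-Real.exp (-y)))) := by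
  have hp : IsPolarPair μ R Θ := ⟨hRm, hΘm, hRpos, hΘunif, hindep⟩
  have := hp.isProbabilityMeasure_map_radius
  have hS : ∀ x, survival (μ.map R) x = 1 - F x := fun x => hF ▸ survival_map hRm x
  have hl : upperEndpoint (μ.map R) = l := by
    rcases hendpoint with ⟨rfl, hlt⟩ | ⟨rfl, hlt, heq⟩
    · exact upperEndpoint_eq_atTop fun x => hS x ▸ sub_pos.2 (hlt x)
    · refine upperEndpoint_eq_nhdsLT fun x => ?_
      rw [hS, sub_pos]
      exact ⟨fun hx => not_le.1 fun hle => hx.ne (heq x hle), hlt x⟩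
  have hR : InGumbelDomain (μ.map R) w := ⟨hw, by simpa only [hS, hl] using hGumbel⟩
  have hbX : ∀ n : ℕ, b n = upperQuantile (μ.map X) (1 / n) := fun n => by
    rw [hb, hG, hX, upperQuantile_map hp.measurable_radius_mul_cos]
    rfl
  have hba : Tendsto (fun n => b n / a n) atTop atTop := by
    simp only [ha, div_div_eq_mul_div, div_one, hbX, hX]
    exact (hR.tendsto_mul_scale hp.survival_map_radius_zero_pos).comp
      (hp.tendsto_upperQuantile_radius_mul_cos hR)
  exact maxima_half_skew_gumbel_marginal_general hp hX hY hR hbX ha (fun n => (hρ n).2)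
    (tendsto_mul_sqrt_atTop_of_tendsto_one_sub_mul hba (by simpa only [mul_div_assoc] using hHR))
end

section
/- For all x, y ∈ ℝ, lim_{n→∞} [P(X ≤ a_n·x + b_n, ρ_n|X| + √(1-ρ_n²)·Y ≤ a_n·y + b_n + a_n·ln 2)]^n = H_λ(x, y + ln 2)·Λ(y + ln 2), where Λ(t) = exp(-e^{-t}) and H_λ(x,y) = exp(-Φ(λ + (x-y)/(2λ))·e^{-y} - Φ(λ + (y-x)/(2λ))·e^{-x}) with Φ the standard normal distribution function. -/
open MeasureTheory Filter Real Set ProbabilityTheory Topology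

/-!
In polar coordinates the probability that one of the two components exceeds its level is an integral
over the angle of the radial tail `Q` at `level / cos`. Write `f = 1 / w`. A level near `u`, seen
from the angle `θ`, is raised by about `u θ² / 2`, so only angles of order `√(f u / u)` matter, and
after rescaling by this order the Gumbel limit of `Q` turns the radial tail into a Gaussian profile
`exp (-(z + s² / 2))`. A Potter-type bound for `Q` makes the passage to the limit dominated.

Since `ρ cos θ + √(1 - ρ²) sin θ = cos (θ - arccos ρ)`, the second component sees the same profile,
shifted by the limit `2 λ` of `arccos ρₙ / √(aₙ / bₙ)`. Integrating the maximum of the two profiles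
over the right half-plane gives the Hüsler–Reiss exponent; in the left half-plane only the second
component, whose first coordinate enters through `|X|`, can be large, and this gives the additional
summand `exp (-y)`. The quantile normalisation cancels the common factor `1 / √(2 π)`.
-/

/-- The filter `u ↑ x_Q`, where `x_Q ≤ ∞` is the upper endpoint of `{u | 0 < Q u}`. Approaching the
endpoint only through points of this set treats finite and infinite endpoints alike. -/
def tailFilter (Q : ℝ → ℝ) : Filter ℝ :=
  map ((↑) : {u | 0 < Q u} → ℝ) atTop

section TailFilter

variable {Q : ℝ → ℝ}

lemma eventually_tailFilter (hQ : ∃ u, 0 < Q u) {P : ℝ → Prop} :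
    (∀ᶠ u in tailFilter Q, P u) ↔ ∃ U, 0 < Q U ∧ ∀ u, U ≤ u → 0 < Q u → P u := by
  obtain ⟨u₀, hu₀⟩ := hQ
  have : Nonempty {u | 0 < Q u} := ⟨⟨u₀, hu₀⟩⟩
  simp only [tailFilter, eventually_map, eventually_atTop]
  constructor
  · rintro ⟨U, hU⟩
    exact ⟨U, U.2, fun u hUu hu => hU ⟨u, hu⟩ hUu⟩
  · rintro ⟨U, hU, hP⟩
    exact ⟨⟨U, hU⟩, fun u hUu => hP u hUu u.2⟩

lemma tailFilter_neBot (hQ : ∃ u, 0 < Q u) : (tailFilter Q).NeBot := by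
  obtain ⟨u₀, hu₀⟩ := hQ
  have : Nonempty {u | 0 < Q u} := ⟨⟨u₀, hu₀⟩⟩
  exact map_neBot

lemma isCountablyGenerated_tailFilter (hQ : Antitone Q) :
    (tailFilter Q).IsCountablyGenerated := by
  have : OrdConnected {u | 0 < Q u} :=
    ⟨fun _ _ _ hv _ hu => lt_of_lt_of_le hv (hQ hu.2)⟩
  unfold tailFilter
  infer_instance

lemma tailFilter_eq_atTop (hQ : ∀ u, 0 < Q u) : tailFilter Q = atTop := by
  ext s
  change (∀ᶠ u in tailFilter Q, u ∈ s) ↔ _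
  simp [eventually_tailFilter ⟨0, hQ 0⟩, hQ]

lemma tailFilter_eq_nhdsLT {x : ℝ} (hQ : ∀ u, 0 < Q u ↔ u < x) : tailFilter Q = 𝓝[<] x := by
  have hset : {u | 0 < Q u} = Iio x := ext hQ
  rw [tailFilter, hset, map_coe_Iio_atTop]

lemma eq_tailFilter_one_sub {F : ℝ → ℝ} {l : Filter ℝ} {x : ℝ}
    (h : (l = atTop ∧ ∀ u, F u < 1) ∨
      (l = 𝓝[<] x ∧ (∀ u < x, F u < 1) ∧ ∀ u, x ≤ u → F u = 1)) :
    l = tailFilter fun u => 1 - F u := by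
  rcases h with ⟨rfl, hlt⟩ | ⟨rfl, hlt, heq⟩
  · exact (tailFilter_eq_atTop fun u => sub_pos.2 (hlt u)).symm
  · refine (tailFilter_eq_nhdsLT fun u => sub_pos.trans ⟨fun hu => ?_, hlt u⟩).symm
    by_contra! hxu
    exact hu.ne (heq u hxu)

end TailFilter

lemma tendsto_of_eventually_between {ι : Type*} {k : Filter ι} {g : ι → ℝ → ℝ} {φ : ℝ → ℝ}
    {p : ι → ℝ} {z : ℝ} (hφ : ContinuousAt φ z) (hg : ∀ s, Tendsto (fun i => g i s) k (𝓝 (φ s)))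
    (hleft : ∀ s < z, ∀ᶠ i in k, p i ≤ g i s) (hright : ∀ s > z, ∀ᶠ i in k, g i s ≤ p i) :
    Tendsto p k (𝓝 (φ z)) := by
  refine tendsto_order.2 ⟨fun c hc => ?_, fun c hc => ?_⟩
  · obtain ⟨s, hcs, hzs⟩ := (((hφ.tendsto.mono_left (nhdsWithin_le_nhds (s := Ioi z))
      ).eventually_const_lt hc).and self_mem_nhdsWithin).exists
    filter_upwards [(hg s).eventually_const_lt hcs, hright s hzs] with i h₁ h₂
    exact h₁.trans_le h₂
  · obtain ⟨s, hcs, hzs⟩ := (((hφ.tendsto.mono_left (nhdsWithin_le_nhds (s := Iio z))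
      ).eventually_lt_const hc).and self_mem_nhdsWithin).exists
    filter_upwards [(hg s).eventually_lt_const hcs, hleft s hzs] with i h₁ h₂
    exact h₂.trans_lt h₁

/-- `Q` is a tail function of Gumbel type with scale (auxiliary) function `f`: the reciprocal
`f = 1 / w` of the scaling function in the definition of the Gumbel max-domain of attraction. The
condition `0 < Q 0` says that the upper endpoint is positive. -/
structure IsGumbelTail (Q f : ℝ → ℝ) : Prop where
  antitone : Antitone Q
  nonneg : ∀ u, 0 ≤ Q u
  zero_pos : 0 < Q 0
  tendsto_ratio : ∀ s : ℝ,
    Tendsto (fun u => Q (u + s * f u) / Q u) (tailFilter Q) (𝓝 (exp (-s)))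

namespace IsGumbelTail

variable {Q f : ℝ → ℝ}

lemma eventually_iff (h : IsGumbelTail Q f) {P : ℝ → Prop} :
    (∀ᶠ u in tailFilter Q, P u) ↔ ∃ U, 0 < Q U ∧ ∀ u, U ≤ u → 0 < Q u → P u :=
  eventually_tailFilter ⟨0, h.zero_pos⟩

lemma eventually_pos (h : IsGumbelTail Q f) : ∀ᶠ u in tailFilter Q, 0 < Q u :=
  h.eventually_iff.2 ⟨0, h.zero_pos, fun _ _ hu => hu⟩

lemma eventually_ge (h : IsGumbelTail Q f) {U : ℝ} (hU : 0 < Q U) :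
    ∀ᶠ u in tailFilter Q, U ≤ u :=
  h.eventually_iff.2 ⟨U, hU, fun _ hu _ => hu⟩

lemma tendsto_tailFilter (h : IsGumbelTail Q f) {ι : Type*} {k : Filter ι} {g : ι → ℝ}
    (hge : ∀ U, 0 < Q U → ∀ᶠ i in k, U ≤ g i) (hpos : ∀ᶠ i in k, 0 < Q (g i)) :
    Tendsto g k (tailFilter Q) := by
  intro s hs
  obtain ⟨U, hU, hs⟩ := h.eventually_iff.1 hs
  rw [mem_map]
  filter_upwards [hge U hU, hpos] with i hUi hi
  exact hs _ hUi hi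

lemma eventually_pos_add_scale (h : IsGumbelTail Q f) :
    ∀ᶠ u in tailFilter Q, 0 < Q (u + f u) := by
  filter_upwards [(h.tendsto_ratio 1).eventually_const_lt (exp_pos _), h.eventually_pos]
    with u hratio hu
  simpa only [one_mul] using (div_pos_iff_of_pos_right hu).1 hratio

lemma eventually_add_scale_le_half (h : IsGumbelTail Q f) :
    ∀ᶠ u in tailFilter Q, Q (u + f u) ≤ Q u / 2 := by
  have hexp : exp (-1) < 1 / 2 := exp_neg_one_lt_half
  filter_upwards [(h.tendsto_ratio 1).eventually_lt_const hexp, h.eventually_pos] with u hratio hu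
  rw [div_lt_iff₀ hu, one_mul] at hratio
  linarith

lemma eventually_scale_pos (h : IsGumbelTail Q f) : ∀ᶠ u in tailFilter Q, 0 < f u := by
  filter_upwards [h.eventually_add_scale_le_half, h.eventually_pos] with u hhalf hu
  by_contra! hf
  linarith [h.antitone (add_le_of_nonpos_right hf : u + f u ≤ u)]

lemma tendsto_add_scale (h : IsGumbelTail Q f) :
    Tendsto (fun u => u + f u) (tailFilter Q) (tailFilter Q) := by
  refine h.tendsto_tailFilter (fun U hU => ?_) h.eventually_pos_add_scale
  filter_upwards [h.eventually_ge hU, h.eventually_scale_pos] with u hUu hf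
  linarith

-- Two steps of length `f` cost a factor `e⁻²`, a single jump of length `3 * f` costs `e⁻³`.
lemma eventually_scale_add_scale_le (h : IsGumbelTail Q f) :
    ∀ᶠ u in tailFilter Q, f (u + f u) ≤ 2 * f u := by
  have hstep := h.tendsto_ratio 1
  simp only [one_mul] at hstep
  have hexp : exp (-3) < exp (-1) * exp (-1) := by
    rw [← exp_add]
    exact exp_lt_exp.2 (by norm_num)
  filter_upwards [(h.tendsto_ratio 3).eventually_lt ((hstep.comp h.tendsto_add_scale).mul hstep)
    hexp, h.eventually_pos, h.eventually_pos_add_scale] with u hlt hu hu'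
  rw [Function.comp_apply, div_mul_div_cancel₀ hu'.ne', div_lt_div_iff_of_pos_right hu] at hlt
  by_contra! hf
  linarith [h.antitone (show u + 3 * f u ≤ u + f u + f (u + f u) by linarith)]

lemma exists_forall_step (h : IsGumbelTail Q f) : ∃ U, 0 < Q U ∧ ∀ u, U ≤ u → 0 < Q u →
    0 < f u ∧ f (u + f u) ≤ 2 * f u ∧ Q (u + f u) ≤ Q u / 2 ∧ 0 < Q (u + f u) :=
  h.eventually_iff.1 (h.eventually_scale_pos.and (h.eventually_scale_add_scale_le.and
    (h.eventually_add_scale_le_half.and h.eventually_pos_add_scale)))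

-- Iterating `u ↦ u + f u` halves `Q` each time while the step at most doubles.
lemma eventually_dyadic_le (h : IsGumbelTail Q f) : ∀ᶠ u in tailFilter Q, ∀ m : ℕ,
    Q (u + (2 ^ m - 1) * f u) ≤ Q u / 2 ^ m := by
  obtain ⟨U, hU, hstep⟩ := h.exists_forall_step
  refine h.eventually_iff.2 ⟨U, hU, fun u hUu hu m => ?_⟩
  induction m generalizing u with
  | zero => simp
  | succ m ih =>
    obtain ⟨hf, hdouble, hhalf, hpos⟩ := hstep u hUu hu
    have hpow : (0 : ℝ) ≤ 2 ^ m - 1 := sub_nonneg.2 (one_le_pow₀ one_le_two)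
    have hle : u + f u + (2 ^ m - 1) * f (u + f u) ≤ u + (2 ^ (m + 1) - 1) * f u := by
      rw [pow_succ]
      linarith [mul_le_mul_of_nonneg_left hdouble hpow]
    calc Q (u + (2 ^ (m + 1) - 1) * f u)
        ≤ Q (u + f u + (2 ^ m - 1) * f (u + f u)) := h.antitone hle
      _ ≤ Q (u + f u) / 2 ^ m := ih _ (by linarith) hpos
      _ ≤ Q u / 2 / 2 ^ m := by gcongr
      _ = Q u / 2 ^ (m + 1) := by rw [div_div, pow_succ']

lemma eventually_le_two_div (h : IsGumbelTail Q f) : ∀ᶠ u in tailFilter Q, ∀ v, 0 ≤ v →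
    Q (u + v * f u) ≤ 2 / (1 + v) * Q u := by
  filter_upwards [h.eventually_dyadic_le, h.eventually_scale_pos, h.eventually_pos]
    with u hdyadic hf hu v hv
  obtain ⟨m, hm, hm'⟩ := exists_nat_pow_near (by linarith : 1 ≤ 1 + v) one_lt_two
  calc Q (u + v * f u) ≤ Q (u + (2 ^ m - 1) * f u) := by
        apply h.antitone
        gcongr
        linarith
    _ ≤ Q u / 2 ^ m := hdyadic m
    _ = 1 / 2 ^ m * Q u := by ring
    _ ≤ 2 / (1 + v) * Q u := by
        refine mul_le_mul_of_nonneg_right ?_ hu.le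
        rw [div_le_div_iff₀ (by positivity) (by positivity)]
        linarith [pow_succ' (2 : ℝ) m]

lemma exists_eventually_le_div (h : IsGumbelTail Q f) {K : ℝ} (hK : 0 ≤ K) :
    ∃ C, 0 ≤ C ∧ ∀ᶠ u in tailFilter Q, ∀ v, 0 ≤ v →
      Q (u + (v - K) * f u) ≤ C / (1 + v) * Q u := by
  have hexp : 1 ≤ exp K := one_le_exp hK
  refine ⟨(1 + K) * (2 * exp K), by positivity, ?_⟩
  have hlt : exp (-(-K)) < 2 * exp K := by
    rw [neg_neg]
    linarith
  filter_upwards [(h.tendsto_ratio (-K)).eventually_lt_const hlt, h.eventually_le_two_div,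
    h.eventually_pos, h.eventually_scale_pos] with u hratio hpotter hu hf v hv
  rw [div_lt_iff₀ hu] at hratio
  rcases le_total K v with hKv | hvK
  · refine (hpotter _ (sub_nonneg.2 hKv)).trans ?_
    gcongr ?_ * _
    rw [div_le_div_iff₀ (by linarith) (by linarith)]
    have hprod : 1 + v ≤ (1 + K) * (1 + (v - K)) := by nlinarith
    nlinarith [mul_le_mul hprod hexp zero_le_one (by positivity)]
  · calc Q (u + (v - K) * f u) ≤ Q (u + -K * f u) := by
          apply h.antitone
          gcongr
          linarith
      _ ≤ 2 * exp K * Q u := hratio.le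
      _ ≤ (1 + K) * (2 * exp K) / (1 + v) * Q u := by
          gcongr
          rw [le_div_iff₀ (by linarith), mul_comm]
          gcongr

lemma tendsto_zero (h : IsGumbelTail Q f) : Tendsto Q (tailFilter Q) (𝓝 0) := by
  have := tailFilter_neBot ⟨0, h.zero_pos⟩
  obtain ⟨c, hc⟩ : ∃ c, Tendsto Q (tailFilter Q) (𝓝 c) :=
    ⟨_, tendsto_map'_iff.2 <| tendsto_atTop_ciInf (fun _ _ huv => h.antitone huv)
      ⟨0, forall_mem_range.2 fun _ => h.nonneg _⟩⟩
  have hstep : Tendsto (fun u => Q (u + f u)) (tailFilter Q) (𝓝 (exp (-1) * c)) := by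
    refine ((h.tendsto_ratio 1).mul hc).congr' ?_
    filter_upwards [h.eventually_pos] with u hu
    rw [one_mul, div_mul_cancel₀ _ hu.ne']
  have hfix : c = exp (-1) * c := tendsto_nhds_unique (hc.comp h.tendsto_add_scale) hstep
  have hc0 : c = 0 := by nlinarith [exp_neg_one_lt_half]
  rwa [hc0] at hc

lemma eventually_mul_scale_lt (h : IsGumbelTail Q f) (s : ℝ) :
    ∀ᶠ u in tailFilter Q, s * f u < u := by
  have hQ0 := h.zero_pos
  have hlt : exp (-(-s)) < exp s + 1 := by
    rw [neg_neg]
    exact lt_add_one _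
  have hsmall : 0 < Q 0 / (exp s + 1) := by positivity
  filter_upwards [(h.tendsto_ratio (-s)).eventually_lt_const hlt,
    h.tendsto_zero.eventually_lt_const hsmall, h.eventually_pos] with u hratio hQu hu
  rw [div_lt_iff₀ hu] at hratio
  rw [lt_div_iff₀ (by positivity)] at hQu
  by_contra! hle
  linarith [h.antitone (show u + -s * f u ≤ 0 by linarith)]

lemma eventually_add_scale_mul_pos (h : IsGumbelTail Q f) (z : ℝ) :
    ∀ᶠ u in tailFilter Q, 0 < u + f u * z := by
  filter_upwards [h.eventually_mul_scale_lt (-z)] with u hu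
  linarith

lemma eventually_self_pos (h : IsGumbelTail Q f) : ∀ᶠ u in tailFilter Q, 0 < u := by
  simpa only [zero_mul] using h.eventually_mul_scale_lt 0

lemma tendsto_scale_div_self (h : IsGumbelTail Q f) :
    Tendsto (fun u => f u / u) (tailFilter Q) (𝓝 0) := by
  refine tendsto_order.2 ⟨fun c hc => ?_, fun c hc => ?_⟩
  · filter_upwards [h.eventually_self_pos, h.eventually_scale_pos] with u hu hf
    exact hc.trans (div_pos hf hu)
  · filter_upwards [h.eventually_mul_scale_lt c⁻¹, h.eventually_self_pos] with u hlt hu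
    rwa [div_lt_iff₀ hu, ← inv_mul_lt_iff₀ hc]

lemma tendsto_ratio_of_tendsto (h : IsGumbelTail Q f) {ι : Type*} {k : Filter ι} {b : ι → ℝ}
    (hb : Tendsto b k (tailFilter Q)) {v : ι → ℝ} {z : ℝ} (hv : Tendsto v k (𝓝 z)) :
    Tendsto (fun i => Q (b i + v i * f (b i)) / Q (b i)) k (𝓝 (exp (-z))) := by
  have hmono : ∀ᶠ i in k, ∀ s t : ℝ, s ≤ t →
      Q (b i + t * f (b i)) / Q (b i) ≤ Q (b i + s * f (b i)) / Q (b i) := by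
    filter_upwards [hb.eventually h.eventually_pos, hb.eventually h.eventually_scale_pos]
      with i hi hf s t hst
    gcongr
    exact h.antitone (by gcongr)
  refine tendsto_of_eventually_between (φ := fun z => exp (-z)) (by fun_prop)
    (fun s => (h.tendsto_ratio s).comp hb) (fun s hs => ?_) (fun s hs => ?_)
  · filter_upwards [hmono, hv.eventually_const_lt hs] with i hmono hi
    exact hmono _ _ hi.le
  · filter_upwards [hmono, hv.eventually_lt_const hs] with i hmono hi
    exact hmono _ _ hi.le

end IsGumbelTail

/-- If `Q` is the tail function of a nonnegative `R`, then `radialTail Q t A` is the probability of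
`t < R * A`, for `0 ≤ t` and every real factor `A`. -/
noncomputable def radialTail (Q : ℝ → ℝ) (t A : ℝ) : ℝ :=
  if 0 < A then Q (t / A) else 0

/-- The order of magnitude of the angles at which a radius with Gumbel scale `f` reaches the level
`u`. -/
noncomputable def angularScale (f : ℝ → ℝ) (u : ℝ) : ℝ :=
  √(f u / u)

/-- The limiting density profile, in rescaled angles `s`, of exceedances of a level shifted by `z`
in the direction `p`. -/
noncomputable def gaussProfile (z p s : ℝ) : ℝ :=
  exp (-(z + (s - p) ^ 2 / 2))

lemma one_sub_cos_eq_sq_mul_sinc_sq (x : ℝ) : 1 - cos x = x ^ 2 / 2 * sinc (x / 2) ^ 2 := by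
  have hhalf : 1 - cos x = 2 * sin (x / 2) ^ 2 := by
    rw [sin_sq_eq_half_sub, mul_div_cancel₀ x two_ne_zero]
    ring
  rcases eq_or_ne x 0 with rfl | hx
  · simp
  · rw [hhalf, sinc_of_ne_zero (by positivity)]
    field_simp

lemma tendsto_sinc_half {ι : Type*} {k : Filter ι} {φ : ι → ℝ} (hφ : Tendsto φ k (𝓝 0)) :
    Tendsto (fun i => sinc (φ i / 2)) k (𝓝 1) := by
  have hcont : Continuous fun x => sinc (x / 2) := by fun_prop
  exact (hcont.tendsto' 0 1 (by simp)).comp hφ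

section RadialTail

variable {Q : ℝ → ℝ}

lemma radialTail_of_pos {A : ℝ} (hA : 0 < A) (t : ℝ) : radialTail Q t A = Q (t / A) :=
  if_pos hA

lemma radialTail_of_nonpos {A : ℝ} (hA : A ≤ 0) (t : ℝ) : radialTail Q t A = 0 :=
  if_neg hA.not_gt

lemma radialTail_nonneg (hQ : ∀ u, 0 ≤ Q u) (t A : ℝ) : 0 ≤ radialTail Q t A := by
  unfold radialTail
  split_ifs
  exacts [hQ _, le_rfl]

lemma monotone_radialTail (hQ : Antitone Q) (hQ₀ : ∀ u, 0 ≤ Q u) {t : ℝ} (ht : 0 ≤ t) :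
    Monotone (radialTail Q t) := by
  intro A B hAB
  rcases le_or_gt A 0 with hA | hA
  · rw [radialTail_of_nonpos hA]
    exact radialTail_nonneg hQ₀ t B
  · rw [radialTail_of_pos hA, radialTail_of_pos (hA.trans_le hAB)]
    exact hQ (div_le_div_of_nonneg_left ht hA hAB)

end RadialTail

-- Jordan-type bound: `cos φ ≤ 1 - 2 φ² / π²` and hence `1 + 2 φ² / π² ≤ 1 / cos φ`.
lemma mul_one_add_sq_le_div_cos {t φ : ℝ} (ht : 0 ≤ t) (hφ : |φ| ≤ π) (hcos : 0 < cos φ) :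
    t * (1 + 2 / π ^ 2 * φ ^ 2) ≤ t / cos φ := by
  have hprod : (1 + 2 / π ^ 2 * φ ^ 2) * cos φ ≤ 1 := by
    have hle := cos_le_one_sub_mul_cos_sq hφ
    have hsq : 0 ≤ 2 / π ^ 2 * φ ^ 2 := by positivity
    nlinarith
  rw [le_div_iff₀ hcos, mul_assoc]
  exact mul_le_of_le_one_right ht hprod

lemma sq_div_two_pi_sq_le {q s M : ℝ} (hq : |q| ≤ M) :
    s ^ 2 / (2 * π ^ 2) ≤ (s - q) ^ 2 / π ^ 2 + M ^ 2 / π ^ 2 := by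
  have hqM : q ^ 2 ≤ M ^ 2 := sq_le_sq.2 (hq.trans (le_abs_self M))
  rw [← add_div, ← div_div, div_le_div_iff_of_pos_right (by positivity)]
  linarith [sq_nonneg (s - 2 * q)]

lemma integrable_div_one_add_sq_div (C : ℝ) :
    Integrable fun s : ℝ => C / (1 + s ^ 2 / (2 * π ^ 2)) := by
  have hscale : (√2 * π)⁻¹ ≠ 0 := by positivity
  refine ((integrable_inv_one_add_sq.comp_mul_left' hscale).const_mul C).congr
    (ae_of_all _ fun s => ?_)
  simp only [mul_pow, inv_pow, sq_sqrt zero_le_two]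
  ring

lemma tendsto_intervalIntegral_div_scale {ι : Type*} {k : Filter ι} [k.IsCountablyGenerated]
    {δ : ι → ℝ} (hδ : Tendsto δ k (𝓝[>] 0)) {c : ℝ} (hc : 0 < c) {H : ι → ℝ → ℝ}
    (hH : ∀ᶠ i in k, Measurable (H i)) {B : ℝ → ℝ} (hB : Integrable B)
    (hbound : ∀ᶠ i in k, ∀ s, |s * δ i| ≤ c → |H i (s * δ i)| ≤ B s) {h : ℝ → ℝ}
    (hlim : ∀ s, Tendsto (fun i => H i (s * δ i)) k (𝓝 (h s))) :
    Tendsto (fun i => (∫ x in -c..c, H i x) / δ i) k (𝓝 (∫ s, h s)) := by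
  have hδ₀ : Tendsto δ k (𝓝 0) := hδ.mono_right nhdsWithin_le_nhds
  have hδpos : ∀ᶠ i in k, 0 < δ i := hδ.eventually self_mem_nhdsWithin
  have hdom : Tendsto (fun i => ∫ s, (Ioc (-c) c).indicator (H i) (s * δ i)) k
      (𝓝 (∫ s, h s)) := by
    refine tendsto_integral_filter_of_dominated_convergence (fun s => |B s|) ?_ ?_ hB.abs
      (ae_of_all _ fun s => ?_)
    · filter_upwards [hH] with i hi
      exact ((hi.indicator measurableSet_Ioc).comp
        (measurable_id.mul_const _)).aestronglyMeasurable
    · filter_upwards [hbound] with i hi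
      refine ae_of_all _ fun s => ?_
      by_cases hs : s * δ i ∈ Ioc (-c) c
      · rw [indicator_of_mem hs, norm_eq_abs]
        exact (hi s (abs_le.2 ⟨hs.1.le, hs.2⟩)).trans (le_abs_self _)
      · rw [indicator_of_notMem hs, norm_zero]
        exact abs_nonneg _
    · have hsδ : Tendsto (fun i => s * δ i) k (𝓝 0) := by
        simpa only [mul_zero] using hδ₀.const_mul s
      refine (hlim s).congr' ?_
      filter_upwards [hsδ.eventually (Ioo_mem_nhds (neg_lt_zero.2 hc) hc)] with i hi
      rw [indicator_of_mem (Ioo_subset_Ioc_self hi)]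
  refine hdom.congr' ?_
  filter_upwards [hδpos] with i hi
  rw [Measure.integral_comp_mul_right, integral_indicator measurableSet_Ioc,
    ← intervalIntegral.integral_of_le (by linarith), abs_of_pos (inv_pos.2 hi), smul_eq_mul,
    div_eq_inv_mul]

namespace IsGumbelTail

variable {Q f : ℝ → ℝ}

lemma measurable_radialTail (h : IsGumbelTail Q f) {t : ℝ} (ht : 0 ≤ t) :
    Measurable (radialTail Q t) :=
  (monotone_radialTail h.antitone h.nonneg ht).measurable

lemma eventually_sq_angularScale (h : IsGumbelTail Q f) :
    ∀ᶠ u in tailFilter Q, angularScale f u ^ 2 = f u / u := by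
  filter_upwards [h.eventually_self_pos, h.eventually_scale_pos] with u hu hf
  exact sq_sqrt (by positivity)

lemma tendsto_angularScale (h : IsGumbelTail Q f) :
    Tendsto (angularScale f) (tailFilter Q) (𝓝[>] 0) := by
  refine tendsto_nhdsWithin_iff.2 ⟨?_, ?_⟩
  · exact (continuous_sqrt.tendsto' 0 0 sqrt_zero).comp h.tendsto_scale_div_self
  · filter_upwards [h.eventually_self_pos, h.eventually_scale_pos] with u hu hf
    exact sqrt_pos.2 (div_pos hf hu)

variable {ι : Type*} {k : Filter ι} {b p : ι → ℝ} {p₀ : ℝ}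

lemma tendsto_sub_mul_angularScale (h : IsGumbelTail Q f) (hb : Tendsto b k (tailFilter Q))
    (hp : Tendsto p k (𝓝 p₀)) (s : ℝ) :
    Tendsto (fun i => (s - p i) * angularScale f (b i)) k (𝓝 0) := by
  simpa only [mul_zero, Function.comp_apply] using (hp.const_sub s).mul
    ((h.tendsto_angularScale.mono_right nhdsWithin_le_nhds).comp hb)

-- With `φ = (s - p) * √(f u / u)`, the level `(u + f u * z) / cos φ` exceeds `u` by about
-- `(z + (s - p) ^ 2 / 2) * f u`.
lemma tendsto_radialTail_cos_div (h : IsGumbelTail Q f) (hb : Tendsto b k (tailFilter Q))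
    (hp : Tendsto p k (𝓝 p₀)) (z s : ℝ) :
    Tendsto (fun i => radialTail Q (b i + f (b i) * z)
      (cos ((s - p i) * angularScale f (b i))) / Q (b i)) k (𝓝 (gaussProfile z p₀ s)) := by
  set φ : ι → ℝ := fun i => (s - p i) * angularScale f (b i) with hφ_def
  have hφ : Tendsto φ k (𝓝 0) := h.tendsto_sub_mul_angularScale hb hp s
  have hcos : Tendsto (fun i => cos (φ i)) k (𝓝 1) :=
    (continuous_cos.tendsto' 0 1 cos_zero).comp hφ
  have hshift : Tendsto
      (fun i => (z + (s - p i) ^ 2 / 2 * sinc (φ i / 2) ^ 2) / cos (φ i)) k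
      (𝓝 (z + (s - p₀) ^ 2 / 2)) := by
    have hnum := ((((hp.const_sub s).pow 2).div_const 2).mul
      ((tendsto_sinc_half hφ).pow 2)).const_add z
    have hquot := hnum.div hcos one_ne_zero
    rw [one_pow, mul_one, div_one] at hquot
    exact hquot
  refine (h.tendsto_ratio_of_tendsto hb hshift).congr' ?_
  filter_upwards [hb.eventually h.eventually_self_pos, hb.eventually h.eventually_scale_pos,
    hb.eventually h.eventually_sq_angularScale, hcos.eventually_const_lt zero_lt_one]
    with i hu hf hsq hcos
  have hone : b i * (1 - cos (φ i)) = f (b i) * ((s - p i) ^ 2 / 2 * sinc (φ i / 2) ^ 2) := by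
    rw [one_sub_cos_eq_sq_mul_sinc_sq, hφ_def, mul_pow, hsq]
    field_simp
  rw [radialTail_of_pos hcos]
  congr 2
  field_simp
  linarith

lemma exists_eventually_radialTail_cos_div_le (h : IsGumbelTail Q f) (M z : ℝ) :
    ∃ C, ∀ᶠ u in tailFilter Q, ∀ q s : ℝ, |q| ≤ M → |(s - q) * angularScale f u| ≤ π →
      radialTail Q (u + f u * z) (cos ((s - q) * angularScale f u)) / Q u ≤
        C / (1 + s ^ 2 / (2 * π ^ 2)) := by
  obtain ⟨C, hC, hpotter⟩ := h.exists_eventually_le_div (K := |z| + M ^ 2 / π ^ 2) (by positivity)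
  refine ⟨C, ?_⟩
  filter_upwards [hpotter, h.eventually_pos, h.eventually_scale_pos, h.eventually_self_pos,
    h.eventually_sq_angularScale, h.eventually_mul_scale_lt (2 * |z|)]
    with u hpotter hQu hf hu hsq hzu q s hq hφ
  set φ := (s - q) * angularScale f u with hφ_def
  rcases le_or_gt (cos φ) 0 with hcos | hcos
  · rw [radialTail_of_nonpos hcos, zero_div]
    positivity
  rw [radialTail_of_pos hcos, div_le_iff₀ hQu]
  refine le_trans (h.antitone ?_) (hpotter (s ^ 2 / (2 * π ^ 2)) (by positivity))
  have hz : -(|z| * f u) ≤ f u * z := by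
    linarith [mul_le_mul_of_nonneg_right (neg_abs_le z) hf.le]
  have hhalf : u / 2 ≤ u + f u * z := by linarith
  have hφsq : u / 2 * (2 / π ^ 2 * φ ^ 2) = (s - q) ^ 2 / π ^ 2 * f u := by
    rw [hφ_def, mul_pow, hsq]
    field_simp
  calc u + (s ^ 2 / (2 * π ^ 2) - (|z| + M ^ 2 / π ^ 2)) * f u
      ≤ u + ((s - q) ^ 2 / π ^ 2 - |z|) * f u := by
        gcongr u + ?_ * f u
        linarith [sq_div_two_pi_sq_le (s := s) hq]
    _ ≤ u + f u * z + u / 2 * (2 / π ^ 2 * φ ^ 2) := by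
        rw [hφsq]
        linarith
    _ ≤ (u + f u * z) * (1 + 2 / π ^ 2 * φ ^ 2) := by
        rw [mul_one_add]
        gcongr
    _ ≤ (u + f u * z) / cos φ := mul_one_add_sq_le_div_cos (by linarith) hφ hcos

lemma tendsto_integral_radialTail_cos_div [k.IsCountablyGenerated] (h : IsGumbelTail Q f)
    (hb : Tendsto b k (tailFilter Q)) (z : ℝ) :
    Tendsto (fun i => (∫ θ in -π..π, radialTail Q (b i + f (b i) * z) (cos θ)) /
      (angularScale f (b i) * Q (b i))) k (𝓝 (∫ s, gaussProfile z 0 s)) := by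
  obtain ⟨C, hC⟩ := h.exists_eventually_radialTail_cos_div_le 0 z
  have hδ : Tendsto (fun i => angularScale f (b i)) k (𝓝[>] 0) := h.tendsto_angularScale.comp hb
  have hlim := tendsto_intervalIntegral_div_scale hδ pi_pos
    (H := fun i θ => radialTail Q (b i + f (b i) * z) (cos θ) / Q (b i))
    (h := gaussProfile z 0) ?_ (integrable_div_one_add_sq_div C) ?_ fun s => ?_
  · refine hlim.congr fun i => ?_
    rw [intervalIntegral.integral_div, div_div, mul_comm (Q _)]
  · filter_upwards [hb.eventually (h.eventually_add_scale_mul_pos z)] with i hi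
    exact ((h.measurable_radialTail hi.le).comp measurable_cos).div_const _
  · filter_upwards [hb.eventually hC] with i hi s hs
    rw [abs_of_nonneg (div_nonneg (radialTail_nonneg h.nonneg _ _) (h.nonneg _))]
    simpa only [sub_zero] using hi 0 s (by simp) (by simpa only [sub_zero] using hs)
  · simpa only [sub_zero] using
      h.tendsto_radialTail_cos_div hb (tendsto_const_nhds (x := 0)) z s

lemma eventually_mul_angularScale_sub (h : IsGumbelTail Q f) (hb : Tendsto b k (tailFilter Q))
    (ψ : ι → ℝ) : ∀ᶠ i in k, ∀ s, s * angularScale f (b i) - ψ i =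
      (s - ψ i / angularScale f (b i)) * angularScale f (b i) := by
  filter_upwards [hb.eventually (h.tendsto_angularScale.eventually self_mem_nhdsWithin)]
    with i hi s
  rw [sub_mul, div_mul_cancel₀ _ (ne_of_gt hi)]

lemma tendsto_radialTail_cos_sub_div (h : IsGumbelTail Q f) (hb : Tendsto b k (tailFilter Q))
    {ψ : ι → ℝ} (hp : Tendsto (fun i => ψ i / angularScale f (b i)) k (𝓝 p₀)) (z s : ℝ) :
    Tendsto (fun i => radialTail Q (b i + f (b i) * z)
      (cos (s * angularScale f (b i) - ψ i)) / Q (b i)) k (𝓝 (gaussProfile z p₀ s)) := by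
  refine (h.tendsto_radialTail_cos_div hb hp z s).congr' ?_
  filter_upwards [h.eventually_mul_angularScale_sub hb ψ] with i hi
  rw [hi]

lemma exists_eventually_radialTail_cos_sub_div_le (h : IsGumbelTail Q f)
    (hb : Tendsto b k (tailFilter Q)) {ψ : ι → ℝ} {c : ℝ} (hψ : ∀ᶠ i in k, c + |ψ i| ≤ π)
    (hp : Tendsto (fun i => ψ i / angularScale f (b i)) k (𝓝 p₀)) (z : ℝ) :
    ∃ C, ∀ᶠ i in k, ∀ s, |s * angularScale f (b i)| ≤ c →
      radialTail Q (b i + f (b i) * z) (cos (s * angularScale f (b i) - ψ i)) / Q (b i) ≤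
        C / (1 + s ^ 2 / (2 * π ^ 2)) := by
  obtain ⟨C, hC⟩ := h.exists_eventually_radialTail_cos_div_le (|p₀| + 1) z
  refine ⟨C, ?_⟩
  filter_upwards [hb.eventually hC, hψ, h.eventually_mul_angularScale_sub hb ψ,
    hp.abs.eventually_lt_const (lt_add_one |p₀|)] with i hC hψ hshift hp s hs
  rw [hshift]
  refine hC _ s hp.le ?_
  rw [← hshift]
  linarith [abs_sub (s * angularScale f (b i)) (ψ i)]

lemma tendsto_integral_max_radialTail_div [k.IsCountablyGenerated] (h : IsGumbelTail Q f)
    (hb : Tendsto b k (tailFilter Q)) (x y : ℝ) {ψ : ι → ℝ} (hψ : ∀ᶠ i in k, |ψ i| ≤ π / 2)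
    (hp : Tendsto (fun i => ψ i / angularScale f (b i)) k (𝓝 p₀)) :
    Tendsto (fun i => (∫ φ in -(π / 2)..π / 2,
        (max (radialTail Q (b i + f (b i) * x) (cos φ))
            (radialTail Q (b i + f (b i) * y) (cos (φ - ψ i))) +
          radialTail Q (b i + f (b i) * y) (cos (φ - ψ i)))) /
      (angularScale f (b i) * Q (b i))) k
      (𝓝 (∫ s, (max (gaussProfile x 0 s) (gaussProfile y p₀ s) + gaussProfile y p₀ s))) := by
  obtain ⟨C, hC⟩ := h.exists_eventually_radialTail_cos_div_le 0 x
  obtain ⟨D, hD⟩ := h.exists_eventually_radialTail_cos_sub_div_le hb (c := π / 2)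
    (hψ.mono fun i hi => by linarith) hp y
  have hδ : Tendsto (fun i => angularScale f (b i)) k (𝓝[>] 0) := h.tendsto_angularScale.comp hb
  have hnonneg : ∀ i t A, 0 ≤ radialTail Q t A / Q (b i) := fun i t A =>
    div_nonneg (radialTail_nonneg h.nonneg t A) (h.nonneg _)
  have hlim := tendsto_intervalIntegral_div_scale hδ pi_div_two_pos
    (H := fun i φ =>
      max (radialTail Q (b i + f (b i) * x) (cos φ) / Q (b i))
        (radialTail Q (b i + f (b i) * y) (cos (φ - ψ i)) / Q (b i)) +
      radialTail Q (b i + f (b i) * y) (cos (φ - ψ i)) / Q (b i))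
    (h := fun s => max (gaussProfile x 0 s) (gaussProfile y p₀ s) + gaussProfile y p₀ s) ?_
    (((integrable_div_one_add_sq_div C).add (integrable_div_one_add_sq_div D)).add
      (integrable_div_one_add_sq_div D)) ?_ fun s => ?_
  · refine hlim.congr fun i => ?_
    simp only [max_div_div_right (h.nonneg (b i)), ← add_div]
    rw [intervalIntegral.integral_div, div_div, mul_comm (Q _)]
  · filter_upwards [hb.eventually (h.eventually_add_scale_mul_pos x),
      hb.eventually (h.eventually_add_scale_mul_pos y)] with i hx hy
    have hx := h.measurable_radialTail hx.le
    have hy := h.measurable_radialTail hy.le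
    fun_prop
  · filter_upwards [hb.eventually hC, hD] with i hC hD s hs
    have hx := hC 0 s (by simp) (by rw [sub_zero]; exact hs.trans (by linarith [pi_pos]))
    rw [sub_zero] at hx
    rw [abs_of_nonneg (add_nonneg (le_max_of_le_left (hnonneg _ _ _)) (hnonneg _ _ _))]
    exact add_le_add ((max_le_add_of_nonneg (hnonneg _ _ _) (hnonneg _ _ _)).trans
      (add_le_add hx (hD s hs))) (hD s hs)
  · have hx := h.tendsto_radialTail_cos_div hb (p := fun _ => 0) tendsto_const_nhds x s
    have hy := h.tendsto_radialTail_cos_sub_div hb hp y s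
    simpa only [sub_zero] using (hx.max hy).add hy

lemma tendsto_one_of_tendsto_mul_div (h : IsGumbelTail Q f) (hb : Tendsto b k (tailFilter Q))
    {ρ : ι → ℝ} {c : ℝ} (hρ : Tendsto (fun i => (1 - ρ i) * b i / f (b i)) k (𝓝 c)) :
    Tendsto ρ k (𝓝 1) := by
  have hlim := (hρ.mul (h.tendsto_scale_div_self.comp hb)).const_sub 1
  rw [mul_zero, sub_zero] at hlim
  refine hlim.congr' ?_
  filter_upwards [hb.eventually h.eventually_self_pos, hb.eventually h.eventually_scale_pos]
    with i hi hf
  rw [Function.comp_apply, div_mul_div_cancel₀ hf.ne', mul_div_cancel_right₀ _ hi.ne',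
    sub_sub_cancel]

lemma tendsto_arccos_div_angularScale (h : IsGumbelTail Q f) (hb : Tendsto b k (tailFilter Q))
    {ρ : ι → ℝ} (hρ : ∀ᶠ i in k, ρ i ≤ 1) {lam : ℝ} (hlam : 0 ≤ lam)
    (hHR : Tendsto (fun i => (1 - ρ i) * b i / f (b i)) k (𝓝 (2 * lam ^ 2))) :
    Tendsto (fun i => arccos (ρ i) / angularScale f (b i)) k (𝓝 (2 * lam)) := by
  have hρ₁ : Tendsto ρ k (𝓝 1) := h.tendsto_one_of_tendsto_mul_div hb hHR
  have hsinc : Tendsto (fun i => sinc (arccos (ρ i) / 2)) k (𝓝 1) :=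
    tendsto_sinc_half ((continuous_arccos.tendsto' 1 0 arccos_one).comp hρ₁)
  have hsqrt := ((hHR.const_mul 2).div (hsinc.pow 2) (by norm_num)).sqrt
  rw [one_pow, div_one, show 2 * (2 * lam ^ 2) = (2 * lam) ^ 2 by ring,
    sqrt_sq (by positivity)] at hsqrt
  refine hsqrt.congr' ?_
  filter_upwards [hb.eventually h.eventually_self_pos, hb.eventually h.eventually_scale_pos,
    hb.eventually h.eventually_sq_angularScale, hsinc.eventually_const_lt zero_lt_one, hρ,
    hρ₁.eventually_const_lt (show (-1 : ℝ) < 1 by norm_num)] with i hi hf hsq hsinc hρ hρ'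
  have hnonneg : 0 ≤ arccos (ρ i) / angularScale f (b i) :=
    div_nonneg (arccos_nonneg _) (sqrt_nonneg _)
  have hcos := one_sub_cos_eq_sq_mul_sinc_sq (arccos (ρ i))
  rw [cos_arccos hρ'.le hρ] at hcos
  rw [← sqrt_sq hnonneg, div_pow, hsq, Pi.div_apply, hcos]
  congr 1
  field_simp

end IsGumbelTail

section GaussianIntegrals

variable (x y z p t : ℝ)

/-- The exponent function `-log H_λ(x, y)` of the bivariate Hüsler–Reiss distribution. -/
noncomputable def huslerReissExponent (lam x y : ℝ) : ℝ :=
  stdNormalCDF (lam + (x - y) / (2 * lam)) * exp (-y) +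
    stdNormalCDF (lam + (y - x) / (2 * lam)) * exp (-x)

lemma gaussProfile_eq_mul :
    gaussProfile z p = fun s => exp (-z) * exp (-(1 / 2) * (s - p) ^ 2) := by
  ext s
  rw [gaussProfile, ← exp_add]
  ring_nf

lemma integrable_gaussProfile : Integrable (gaussProfile z p) := by
  rw [gaussProfile_eq_mul]
  exact ((integrable_exp_neg_mul_sq one_half_pos).comp_sub_right p).const_mul _

lemma integrable_max_gaussProfile (q : ℝ) :
    Integrable fun s => max (gaussProfile x p s) (gaussProfile y q s) :=
  (integrable_gaussProfile x p).sup (integrable_gaussProfile y q)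

lemma integral_gaussProfile : ∫ s, gaussProfile z p s = √(2 * π) * exp (-z) := by
  rw [gaussProfile_eq_mul, integral_const_mul,
    integral_sub_right_eq_self (fun s => exp (-(1 / 2) * s ^ 2)), integral_gaussian, mul_comm]
  congr 2
  ring

lemma integral_Iic_gaussProfile_zero :
    ∫ s in Iic t, gaussProfile z 0 s = √(2 * π) * (stdNormalCDF t * exp (-z)) := by
  have hsqrt : √(2 * π) ≠ 0 := by positivity
  have hexp : (fun s : ℝ => exp (-(1 / 2) * (s - 0) ^ 2)) = fun s => exp (-s ^ 2 / 2) := by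
    ext s
    ring_nf
  rw [gaussProfile_eq_mul, integral_const_mul, hexp, stdNormalCDF]
  field_simp

lemma integral_Ioi_gaussProfile :
    ∫ s in Ioi t, gaussProfile z p s = √(2 * π) * (stdNormalCDF (p - t) * exp (-z)) := by
  have hreflect (s : ℝ) : gaussProfile z p (p - s) = gaussProfile z 0 s := by
    simp only [gaussProfile]
    ring_nf
  rw [← integral_Iic_gaussProfile_zero, integral_Iic_eq_integral_Iio,
    ← integral_indicator measurableSet_Ioi, ← integral_indicator measurableSet_Iio,
    ← integral_sub_left_eq_self _ volume p]
  congr 1 with s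
  simp only [indicator, mem_Ioi, mem_Iio, lt_sub_comm, hreflect]

variable {lam : ℝ}

lemma gaussProfile_le_gaussProfile_iff (hlam : 0 < lam) (s : ℝ) :
    gaussProfile y (2 * lam) s ≤ gaussProfile x 0 s ↔ s ≤ lam + (y - x) / (2 * lam) := by
  rw [gaussProfile, gaussProfile, exp_le_exp, neg_le_neg_iff, ← sub_nonneg,
    show y + (s - 2 * lam) ^ 2 / 2 - (x + (s - 0) ^ 2 / 2) =
      2 * lam * (lam + (y - x) / (2 * lam) - s) by field_simp; ring,
    mul_nonneg_iff_of_pos_left (by positivity), sub_nonneg]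

lemma integral_max_gaussProfile (hlam : 0 < lam) :
    ∫ s, max (gaussProfile x 0 s) (gaussProfile y (2 * lam) s) =
      √(2 * π) * huslerReissExponent lam x y := by
  have hint := integrable_max_gaussProfile x y 0 (2 * lam)
  have hle := gaussProfile_le_gaussProfile_iff x y hlam
  have hleft : ∫ s in Iic (lam + (y - x) / (2 * lam)),
      max (gaussProfile x 0 s) (gaussProfile y (2 * lam) s) = _ :=
    setIntegral_congr_fun measurableSet_Iic fun s hs => max_eq_left ((hle s).2 hs)
  have hright : ∫ s in Ioi (lam + (y - x) / (2 * lam)),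
      max (gaussProfile x 0 s) (gaussProfile y (2 * lam) s) = _ :=
    setIntegral_congr_fun measurableSet_Ioi fun s hs =>
      max_eq_right (le_of_not_ge ((hle s).not.2 (not_le.2 hs)))
  rw [← intervalIntegral.integral_Iic_add_Ioi hint.integrableOn hint.integrableOn, hleft, hright,
    integral_Iic_gaussProfile_zero, integral_Ioi_gaussProfile, huslerReissExponent,
    show 2 * lam - (lam + (y - x) / (2 * lam)) = lam + (x - y) / (2 * lam) by ring]
  ring

lemma integral_max_gaussProfile_add (hlam : 0 < lam) :
    ∫ s, (max (gaussProfile x 0 s) (gaussProfile y (2 * lam) s) + gaussProfile y (2 * lam) s) =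
      √(2 * π) * (huslerReissExponent lam x y + exp (-y)) := by
  rw [integral_add (integrable_max_gaussProfile x y 0 (2 * lam))
    (integrable_gaussProfile y (2 * lam)), integral_max_gaussProfile x y hlam,
    integral_gaussProfile, mul_add]

end GaussianIntegrals

section UpperTail

variable {Ω : Type*} [MeasurableSpace Ω] {μ : Measure Ω} {R X : Ω → ℝ}

/-- The survival function `u ↦ μ (X > u)` of a real random variable `X`. -/
noncomputable def upperTail (μ : Measure Ω) (X : Ω → ℝ) (u : ℝ) : ℝ :=
  μ.real {ω | u < X ω}

lemma upperTail_nonneg (u : ℝ) : 0 ≤ upperTail μ X u :=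
  measureReal_nonneg

lemma antitone_upperTail [IsFiniteMeasure μ] : Antitone (upperTail μ X) :=
  fun _ _ huv => measureReal_mono fun _ hω => huv.trans_lt hω

lemma upperTail_eq_one_sub [IsProbabilityMeasure μ] (hX : Measurable X) (u : ℝ) :
    upperTail μ X u = 1 - μ.real {ω | X ω ≤ u} := by
  rw [← probReal_compl_eq_one_sub (measurableSet_le hX measurable_const)]
  simp only [upperTail, compl_ofPred, not_le]

lemma upperTail_eq_one_of_neg [IsProbabilityMeasure μ] (hR : 0 ≤ᵐ[μ] R) {u : ℝ} (hu : u < 0) :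
    upperTail μ R u = 1 := by
  rw [← probReal_univ (μ := μ)]
  refine measureReal_congr (eventuallyEq_univ.2 ?_)
  filter_upwards [hR] with ω hω using hu.trans_le hω

lemma isGumbelTail_upperTail [IsProbabilityMeasure μ] (hR : 0 ≤ᵐ[μ] R) {f : ℝ → ℝ}
    (hlim : ∀ s : ℝ, Tendsto (fun u => upperTail μ R (u + s * f u) / upperTail μ R u)
      (tailFilter (upperTail μ R)) (𝓝 (exp (-s)))) :
    IsGumbelTail (upperTail μ R) f := by
  refine ⟨antitone_upperTail, upperTail_nonneg, ?_, hlim⟩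
  -- If `R = 0` almost surely, all the ratios are at most `1`, while they should tend to `e`.
  by_contra hzero
  have hpos (u : ℝ) : 0 < upperTail μ R u ↔ u < 0 := by
    refine ⟨fun hu => ?_, fun hu => by simp [upperTail_eq_one_of_neg hR hu]⟩
    by_contra! hu'
    exact hzero (hu.trans_le (antitone_upperTail hu'))
  have hlim := hlim (-1)
  rw [tailFilter_eq_nhdsLT hpos] at hlim
  have hle : exp (-(-1)) ≤ 1 := by
    refine le_of_tendsto hlim (eventually_of_mem self_mem_nhdsWithin fun u hu => ?_)
    rw [upperTail_eq_one_of_neg hR hu, div_one]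
    exact measureReal_le_one
  linarith [add_one_le_exp (-(-1) : ℝ)]

lemma measureReal_or_eq_max [IsFiniteMeasure μ] {p q : Ω → Prop}
    (h : (∀ᵐ ω ∂μ, p ω → q ω) ∨ ∀ᵐ ω ∂μ, q ω → p ω) :
    μ.real {ω | p ω ∨ q ω} = max (μ.real {ω | p ω}) (μ.real {ω | q ω}) := by
  wlog hpq : ∀ᵐ ω ∂μ, p ω → q ω generalizing p q
  · simpa only [or_comm, max_comm] using this h.symm (h.resolve_left hpq)
  · have hle : μ.real {ω | p ω} ≤ μ.real {ω | q ω} :=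
      ENNReal.toReal_mono (measure_ne_top _ _) (measure_mono_ae hpq)
    rw [max_eq_right hle]
    refine measureReal_congr ?_
    filter_upwards [hpq] with ω hω using propext (or_iff_right_of_imp hω)

lemma measureReal_lt_mul_eq_radialTail (hR : 0 ≤ᵐ[μ] R) {t : ℝ} (ht : 0 ≤ t) (A : ℝ) :
    μ.real {ω | t < R ω * A} = radialTail (upperTail μ R) t A := by
  rcases le_or_gt A 0 with hA | hA
  · rw [radialTail_of_nonpos hA, measureReal_def, ENNReal.toReal_eq_zero_iff]
    refine Or.inl (measure_eq_zero_iff_ae_notMem.2 ?_)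
    filter_upwards [hR] with ω hω
    exact ((mul_nonpos_of_nonneg_of_nonpos hω hA).trans ht).not_gt
  · simp only [radialTail_of_pos hA, upperTail, div_lt_iff₀ hA]

lemma lt_mul_of_mul_le_mul {r t t' A B : ℝ} (hr : 0 ≤ r) (ht : 0 < t) (ht' : 0 < t')
    (hAB : t * B ≤ t' * A) (hB : t' < r * B) : t < r * A := by
  refine lt_of_mul_lt_mul_left ?_ ht'.le
  calc t' * t < t * (r * B) := by rw [mul_comm]; gcongr
    _ = r * (t * B) := by ring
    _ ≤ r * (t' * A) := by gcongr
    _ = t' * (r * A) := by ring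

lemma measureReal_lt_mul_or_lt_mul [IsFiniteMeasure μ] (hR : 0 ≤ᵐ[μ] R) {t t' : ℝ} (ht : 0 < t)
    (ht' : 0 < t') (A B : ℝ) :
    μ.real {ω | t < R ω * A ∨ t' < R ω * B} =
      max (radialTail (upperTail μ R) t A) (radialTail (upperTail μ R) t' B) := by
  rw [← measureReal_lt_mul_eq_radialTail hR ht.le, ← measureReal_lt_mul_eq_radialTail hR ht'.le]
  refine measureReal_or_eq_max ((le_total (t' * A) (t * B)).imp (fun hAB => ?_) fun hAB => ?_)
  · filter_upwards [hR] with ω hω using lt_mul_of_mul_le_mul hω ht' ht hAB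
  · filter_upwards [hR] with ω hω using lt_mul_of_mul_le_mul hω ht ht' hAB

end UpperTail

lemma intervalIntegral_eq_add_reflect_of_periodic {J : ℝ → ℝ} (hJ : J.Periodic (2 * π))
    (hint : ∀ a b, IntervalIntegrable J volume a b) :
    ∫ θ in -π..π, J θ = ∫ φ in -(π / 2)..π / 2, (J φ + J (π - φ)) := by
  have hshift := hJ.intervalIntegral_add_eq (-π) (-(π / 2))
  have hreflect : ∫ φ in -(π / 2)..π / 2, J (π - φ) = ∫ θ in π / 2..-(π / 2) + 2 * π, J θ := by
    rw [intervalIntegral.integral_comp_sub_left]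
    congr 1 <;> ring
  have hint' : IntervalIntegrable (fun φ => J (π - φ)) volume (-(π / 2)) (π / 2) := by
    simpa using (hint (π - -(π / 2)) (π - π / 2)).comp_sub_left π
  rw [show -π + 2 * π = π by ring] at hshift
  rw [hshift, intervalIntegral.integral_add (hint _ _) hint', hreflect,
    intervalIntegral.integral_add_adjacent_intervals (hint _ _) (hint _ _)]

/-- The radius `R` and the angle `Θ` are the polar coordinates of a rotationally symmetric random
vector `(R cos Θ, R sin Θ)` in the plane. -/
structure IsSpherical {Ω : Type*} [MeasurableSpace Ω] (μ : Measure Ω) (R Θ : Ω → ℝ) : Prop where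
  measurable_radius : Measurable R
  measurable_angle : Measurable Θ
  radius_nonneg : 0 ≤ᵐ[μ] R
  map_angle : μ.map Θ = (ENNReal.ofReal (2 * π))⁻¹ • volume.restrict (Ioo (-π) π)
  indepFun : IndepFun R Θ μ

section Polar

variable {Ω : Type*} [MeasurableSpace Ω] {μ : Measure Ω} {R Θ : Ω → ℝ}

/-- For `X = R cos Θ` and `Y = R sin Θ`, the probability that at least one component of
`(X, r |X| + √(1 - r²) Y)` exceeds the respective level in `(t, t')`. -/
noncomputable def exceedanceProb (μ : Measure Ω) (R Θ : Ω → ℝ) (r t t' : ℝ) : ℝ :=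
  μ.real {ω | t < R ω * cos (Θ ω) ∨
    t' < r * |R ω * cos (Θ ω)| + √(1 - r ^ 2) * (R ω * sin (Θ ω))}

lemma measureReal_slice [IsFiniteMeasure μ] (hR : 0 ≤ᵐ[μ] R) {t t' : ℝ} (ht : 0 < t)
    (ht' : 0 < t') (r θ : ℝ) :
    μ.real {ω | t < R ω * cos θ ∨ t' < r * |R ω * cos θ| + √(1 - r ^ 2) * (R ω * sin θ)} =
      max (radialTail (upperTail μ R) t (cos θ))
        (radialTail (upperTail μ R) t' (r * |cos θ| + √(1 - r ^ 2) * sin θ)) := by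
  rw [← measureReal_lt_mul_or_lt_mul hR ht ht']
  refine measureReal_congr ?_
  filter_upwards [hR] with ω hω
  have hlinear : r * |R ω * cos θ| + √(1 - r ^ 2) * (R ω * sin θ) =
      R ω * (r * |cos θ| + √(1 - r ^ 2) * sin θ) := by
    rw [abs_mul, abs_of_nonneg hω]
    ring
  exact congrArg (fun v => t < R ω * cos θ ∨ t' < v) hlinear

lemma cos_sub_arccos {r : ℝ} (hr : r ∈ Icc (-1) 1) (φ : ℝ) :
    cos (φ - arccos r) = r * cos φ + √(1 - r ^ 2) * sin φ := by
  rw [cos_sub, cos_arccos hr.1 hr.2, sin_arccos]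
  ring

namespace IsSpherical

lemma measurable_slice [SFinite μ] (h : IsSpherical μ R Θ) {S : Set (ℝ × ℝ)}
    (hS : MeasurableSet S) : Measurable fun θ => μ {ω | (R ω, θ) ∈ S} :=
  measurable_measure_prodMk_right (μ := μ) (hS.preimage (h.measurable_radius.prodMap measurable_id))

variable [IsProbabilityMeasure μ]

lemma lintegral_slice (h : IsSpherical μ R Θ) {S : Set (ℝ × ℝ)} (hS : MeasurableSet S) :
    μ {ω | (R ω, Θ ω) ∈ S} =
      (ENNReal.ofReal (2 * π))⁻¹ * ∫⁻ θ in Ioo (-π) π, μ {ω | (R ω, θ) ∈ S} := by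
  have := Measure.isProbabilityMeasure_map (μ := μ) h.measurable_radius.aemeasurable
  have hmap : μ {ω | (R ω, Θ ω) ∈ S} = ((μ.map R).prod (μ.map Θ)) S := by
    rw [← h.indepFun.map_prod_eq_prod_map_map h.measurable_radius.aemeasurable
      h.measurable_angle.aemeasurable,
      Measure.map_apply (h.measurable_radius.prodMk h.measurable_angle) hS]
    rfl
  have hslice (θ : ℝ) : (μ.map R) ((fun x => (x, θ)) ⁻¹' S) = μ {ω | (R ω, θ) ∈ S} :=
    Measure.map_apply h.measurable_radius (measurable_prodMk_right hS)
  rw [hmap, h.map_angle, Measure.prod_apply_symm hS, lintegral_smul_measure, smul_eq_mul]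
  simp_rw [hslice]

lemma measureReal_eq_integral_slice (h : IsSpherical μ R Θ) {S : Set (ℝ × ℝ)}
    (hS : MeasurableSet S) :
    μ.real {ω | (R ω, Θ ω) ∈ S} = (2 * π)⁻¹ * ∫ θ in -π..π, μ.real {ω | (R ω, θ) ∈ S} := by
  rw [measureReal_def, h.lintegral_slice hS, ENNReal.toReal_mul, ENNReal.toReal_inv,
    ENNReal.toReal_ofReal (by positivity), intervalIntegral.integral_of_le (by linarith [pi_pos]),
    integral_Ioc_eq_integral_Ioo,
    ← integral_toReal (h.measurable_slice hS).aemeasurable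
      (ae_of_all _ fun _ => measure_lt_top _ _)]
  rfl

lemma intervalIntegrable_slice (h : IsSpherical μ R Θ) {S : Set (ℝ × ℝ)} (hS : MeasurableSet S)
    (a b : ℝ) : IntervalIntegrable (fun θ => μ.real {ω | (R ω, θ) ∈ S}) volume a b := by
  refine (intervalIntegrable_const (c := (1 : ℝ))).mono_fun
    (h.measurable_slice hS).ennreal_toReal.aestronglyMeasurable (ae_of_all _ fun θ => ?_)
  simpa only [norm_one, norm_of_nonneg measureReal_nonneg] using measureReal_le_one

lemma upperTail_cos_eq_integral (h : IsSpherical μ R Θ) {t : ℝ} (ht : 0 ≤ t) :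
    upperTail μ (fun ω => R ω * cos (Θ ω)) t =
      (2 * π)⁻¹ * ∫ θ in -π..π, radialTail (upperTail μ R) t (cos θ) := by
  simp_rw [← measureReal_lt_mul_eq_radialTail h.radius_nonneg ht]
  exact h.measureReal_eq_integral_slice (S := {p | t < p.1 * cos p.2})
    (measurableSet_lt measurable_const (by fun_prop))

-- On the right half-plane the second component is `R * cos (θ - arccos r)`; the left half-plane is
-- folded onto it by `θ ↦ π - θ`, and there the first component never exceeds `t > 0`.
lemma exceedanceProb_eq_integral (h : IsSpherical μ R Θ) {t t' r : ℝ} (ht : 0 < t) (ht' : 0 < t')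
    (hr : r ∈ Icc (-1) 1) :
    exceedanceProb μ R Θ r t t' = (2 * π)⁻¹ * ∫ φ in -(π / 2)..π / 2,
      (max (radialTail (upperTail μ R) t (cos φ))
          (radialTail (upperTail μ R) t' (cos (φ - arccos r))) +
        radialTail (upperTail μ R) t' (cos (φ - arccos r))) := by
  let S : Set (ℝ × ℝ) := {p | t < p.1 * cos p.2 ∨
    t' < r * |p.1 * cos p.2| + √(1 - r ^ 2) * (p.1 * sin p.2)}
  have hS : MeasurableSet S := by
    simp only [S, ofPred_or]
    exact (measurableSet_lt measurable_const (by fun_prop)).union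
      (measurableSet_lt measurable_const (by fun_prop))
  have hslice := measureReal_slice h.radius_nonneg ht ht' r
  have hperiodic : (fun θ => μ.real {ω | (R ω, θ) ∈ S}).Periodic (2 * π) := fun θ => by
    simp only [S, mem_ofPred_eq, cos_add_two_pi, sin_add_two_pi]
  refine (h.measureReal_eq_integral_slice hS).trans ?_
  rw [intervalIntegral_eq_add_reflect_of_periodic hperiodic (h.intervalIntegrable_slice hS)]
  congr 1
  refine intervalIntegral.integral_congr fun φ hφ => ?_
  rw [uIcc_of_le (by linarith [pi_pos])] at hφ
  have hcos : 0 ≤ cos φ := cos_nonneg_of_mem_Icc hφ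
  simp only [S, mem_ofPred_eq, hslice]
  simp only [cos_pi_sub, sin_pi_sub, abs_neg, abs_of_nonneg hcos,
    cos_sub_arccos hr, radialTail_of_nonpos (neg_nonpos.2 hcos),
    max_eq_right (radialTail_nonneg upperTail_nonneg _ _)]

end IsSpherical

end Polar

section Quantiles

variable {Q f T : ℝ → ℝ} {ι : Type*} {k : Filter ι} {a b c p : ι → ℝ}

lemma tendsto_div_of_isGLB (hT : Antitone T) (hb : ∀ᶠ i in k, IsGLB {x | T x < p i} (b i))
    (ha : ∀ᶠ i in k, 0 < a i) (hc : ∀ᶠ i in k, 0 < c i) {φ : ℝ → ℝ} (hφ : ContinuousAt φ 0)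
    (hlim : ∀ z, Tendsto (fun i => T (b i + a i * z) / c i) k (𝓝 (φ z))) :
    Tendsto (fun i => p i / c i) k (𝓝 (φ 0)) := by
  refine tendsto_of_eventually_between hφ hlim (fun z hz => ?_) (fun z hz => ?_)
  · filter_upwards [hb, ha, hc] with i hb ha hc
    gcongr
    by_contra! hlt
    linarith [hb.1 hlt, mul_neg_of_pos_of_neg ha hz]
  · filter_upwards [hb, ha, hc] with i hb ha hc
    obtain ⟨x, hx, hxb⟩ := (isGLB_lt_iff hb).1 (lt_add_of_pos_right (b i) (mul_pos ha hz))
    gcongr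
    exact (hT hxb.le).trans (le_of_lt hx)

lemma eventually_mem_lowerBounds (hT : Antitone T) (hp : Tendsto p k (𝓝[>] 0)) {U : ℝ}
    (hU : 0 < T U) : ∀ᶠ i in k, U ∈ lowerBounds {x | T x < p i} := by
  filter_upwards [(hp.mono_right nhdsWithin_le_nhds).eventually_lt_const hU] with i hi x hx
  by_contra! hlt
  exact absurd (hT hlt.le) ((lt_trans hx hi).not_ge)

namespace IsGumbelTail

lemma exists_lt_of_le (h : IsGumbelTail Q f) (hTQ : ∀ u, T u ≤ Q u) {ε : ℝ} (hε : 0 < ε) :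
    ∃ x, 0 < Q x ∧ T x < ε := by
  have := tailFilter_neBot ⟨0, h.zero_pos⟩
  obtain ⟨x, hx, hlt⟩ := (h.eventually_pos.and (h.tendsto_zero.eventually_lt_const hε)).exists
  exact ⟨x, hx, (hTQ x).trans_lt hlt⟩

lemma eventually_isGLB_sInf (h : IsGumbelTail Q f) (hT : Antitone T) (hTQ : ∀ u, T u ≤ Q u)
    (hT₀ : 0 < T 0) (hp : Tendsto p k (𝓝[>] 0)) :
    ∀ᶠ i in k, IsGLB {x | T x < p i} (sInf {x | T x < p i}) := by
  filter_upwards [eventually_mem_lowerBounds hT hp hT₀, hp.eventually self_mem_nhdsWithin]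
    with i hbdd hi
  obtain ⟨x, -, hx⟩ := h.exists_lt_of_le hTQ hi
  exact isGLB_csInf ⟨x, hx⟩ ⟨0, hbdd⟩

lemma tendsto_tailFilter_of_isGLB (h : IsGumbelTail Q f) (hT : Antitone T)
    (hTQ : ∀ u, T u ≤ Q u) (hQT : ∀ U, 0 < Q U → 0 < T U) (hp : Tendsto p k (𝓝[>] 0))
    (hb : ∀ᶠ i in k, IsGLB {x | T x < p i} (b i)) : Tendsto b k (tailFilter Q) := by
  refine h.tendsto_tailFilter (fun U hU => ?_) ?_
  · filter_upwards [eventually_mem_lowerBounds hT hp (hQT U hU), hb] with i hlower hb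
    exact hb.2 hlower
  · filter_upwards [hp.eventually self_mem_nhdsWithin, hb] with i hi hb
    obtain ⟨x, hQx, hx⟩ := h.exists_lt_of_le hTQ hi
    exact hQx.trans_le (h.antitone (hb.1 hx))

end IsGumbelTail

end Quantiles

lemma inv_two_pi_mul_sqrt_two_pi : (2 * π)⁻¹ * √(2 * π) = (√(2 * π))⁻¹ := by
  rw [inv_mul_eq_div, sqrt_div_self']
  exact one_div _

namespace IsSpherical

variable {Ω : Type*} [MeasurableSpace Ω] {μ : Measure Ω} {R Θ : Ω → ℝ}

lemma upperTail_cos_le [IsFiniteMeasure μ] (h : IsSpherical μ R Θ) (u : ℝ) :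
    upperTail μ (fun ω => R ω * cos (Θ ω)) u ≤ upperTail μ R u := by
  refine ENNReal.toReal_mono (measure_ne_top _ _) (measure_mono_ae ?_)
  filter_upwards [h.radius_nonneg] with ω hω hu
  exact lt_of_lt_of_le hu (mul_le_of_le_one_right hω (cos_le_one _))

variable [IsProbabilityMeasure μ] {f : ℝ → ℝ} {ι : Type*} {k : Filter ι} [k.IsCountablyGenerated]
  {b p ρ : ι → ℝ} {lam : ℝ}

lemma tendsto_upperTail_cos_div (h : IsSpherical μ R Θ) (hR : IsGumbelTail (upperTail μ R) f)
    (hb : Tendsto b k (tailFilter (upperTail μ R))) (z : ℝ) :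
    Tendsto (fun i => upperTail μ (fun ω => R ω * cos (Θ ω)) (b i + f (b i) * z) /
      (angularScale f (b i) * upperTail μ R (b i))) k (𝓝 ((√(2 * π))⁻¹ * exp (-z))) := by
  have hlim := (hR.tendsto_integral_radialTail_cos_div hb z).const_mul (2 * π)⁻¹
  rw [integral_gaussProfile, ← mul_assoc, inv_two_pi_mul_sqrt_two_pi] at hlim
  refine hlim.congr' ?_
  filter_upwards [hb.eventually (hR.eventually_add_scale_mul_pos z)] with i hi
  rw [h.upperTail_cos_eq_integral hi.le, mul_div_assoc]

lemma tendsto_exceedanceProb_div (h : IsSpherical μ R Θ) (hR : IsGumbelTail (upperTail μ R) f)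
    (hb : Tendsto b k (tailFilter (upperTail μ R))) (hlam : 0 < lam)
    (hHR : Tendsto (fun i => (1 - ρ i) * b i / f (b i)) k (𝓝 (2 * lam ^ 2))) (x y : ℝ) :
    Tendsto (fun i => exceedanceProb μ R Θ (ρ i) (b i + f (b i) * x) (b i + f (b i) * y) /
      (angularScale f (b i) * upperTail μ R (b i))) k
      (𝓝 ((√(2 * π))⁻¹ * (huslerReissExponent lam x y + exp (-y)))) := by
  have hρ : ∀ᶠ i in k, ρ i ≤ 1 := by
    filter_upwards [hHR.eventually_const_lt (by positivity), hb.eventually hR.eventually_self_pos,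
      hb.eventually hR.eventually_scale_pos] with i hi hbi hf
    rw [div_pos_iff_of_pos_right hf, mul_pos_iff_of_pos_right hbi] at hi
    linarith
  have hρ₀ : ∀ᶠ i in k, 0 ≤ ρ i :=
    (hR.tendsto_one_of_tendsto_mul_div hb hHR).eventually_const_le zero_lt_one
  have hangle : ∀ᶠ i in k, |arccos (ρ i)| ≤ π / 2 := hρ₀.mono fun i hi =>
    (abs_of_nonneg (arccos_nonneg _)).trans_le (arccos_le_pi_div_two.2 hi)
  have hlim := (hR.tendsto_integral_max_radialTail_div hb x y hangle
    (hR.tendsto_arccos_div_angularScale hb hρ hlam.le hHR)).const_mul (2 * π)⁻¹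
  rw [integral_max_gaussProfile_add x y hlam, ← mul_assoc, inv_two_pi_mul_sqrt_two_pi] at hlim
  refine hlim.congr' ?_
  filter_upwards [hb.eventually (hR.eventually_add_scale_mul_pos x),
    hb.eventually (hR.eventually_add_scale_mul_pos y), hρ₀, hρ] with i hx hy hρ₀ hρ₁
  rw [h.exceedanceProb_eq_integral hx hy ⟨by linarith, hρ₁⟩, mul_div_assoc]

lemma upperTail_cos_pos (h : IsSpherical μ R Θ) (hR : IsGumbelTail (upperTail μ R) f) {U : ℝ}
    (hU : 0 < upperTail μ R U) : 0 < upperTail μ (fun ω => R ω * cos (Θ ω)) U := by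
  have := isCountablyGenerated_tailFilter hR.antitone
  have := tailFilter_neBot ⟨U, hU⟩
  have hlim := h.tendsto_upperTail_cos_div hR tendsto_id 0
  obtain ⟨u, hpos, hUu, hu, hδ⟩ := ((hlim.eventually_const_lt (by positivity)).and
    ((hR.eventually_ge hU).and (hR.eventually_pos.and
      (hR.tendsto_angularScale.eventually self_mem_nhdsWithin)))).exists
  rw [mul_zero, id, add_zero, div_pos_iff_of_pos_right (mul_pos hδ hu)] at hpos
  exact hpos.trans_le (antitone_upperTail hUu)

lemma tendsto_exceedanceProb_div_of_isGLB (h : IsSpherical μ R Θ)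
    (hR : IsGumbelTail (upperTail μ R) f) (hp : Tendsto p k (𝓝[>] 0))
    (hb : ∀ᶠ i in k, IsGLB {x | upperTail μ (fun ω => R ω * cos (Θ ω)) x < p i} (b i))
    (hlam : 0 < lam)
    (hHR : Tendsto (fun i => (1 - ρ i) * b i / f (b i)) k (𝓝 (2 * lam ^ 2))) (x y : ℝ) :
    Tendsto (fun i =>
      exceedanceProb μ R Θ (ρ i) (b i + f (b i) * x) (b i + f (b i) * y) / p i) k
      (𝓝 (huslerReissExponent lam x y + exp (-y))) := by
  have hbtail : Tendsto b k (tailFilter (upperTail μ R)) :=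
    hR.tendsto_tailFilter_of_isGLB antitone_upperTail h.upperTail_cos_le
      (fun _ => h.upperTail_cos_pos hR) hp hb
  have hc : ∀ᶠ i in k, 0 < angularScale f (b i) * upperTail μ R (b i) := by
    filter_upwards [hbtail.eventually hR.eventually_pos,
      (hR.tendsto_angularScale.comp hbtail).eventually self_mem_nhdsWithin] with i hi hδ
    exact mul_pos hδ hi
  have hquantile := tendsto_div_of_isGLB (a := fun i => f (b i)) antitone_upperTail hb
    (hbtail.eventually hR.eventually_scale_pos) hc
    (φ := fun z => (√(2 * π))⁻¹ * exp (-z)) (by fun_prop) (h.tendsto_upperTail_cos_div hR hbtail)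
  rw [neg_zero, exp_zero, mul_one] at hquantile
  have hratio := (h.tendsto_exceedanceProb_div hR hbtail hlam hHR x y).div hquantile
    (by positivity)
  rw [mul_div_cancel_left₀ _ (by positivity)] at hratio
  refine hratio.congr' ?_
  filter_upwards [hc] with i hi using div_div_div_cancel_right₀ hi.ne' _ _

lemma measureReal_le_eq_one_sub_exceedanceProb (h : IsSpherical μ R Θ) (r t t' : ℝ) :
    μ.real {ω | R ω * cos (Θ ω) ≤ t ∧
      r * |R ω * cos (Θ ω)| + √(1 - r ^ 2) * (R ω * sin (Θ ω)) ≤ t'} =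
      1 - exceedanceProb μ R Θ r t t' := by
  have hRm := h.measurable_radius
  have hΘm := h.measurable_angle
  have hmeas : MeasurableSet {ω | t < R ω * cos (Θ ω) ∨
      t' < r * |R ω * cos (Θ ω)| + √(1 - r ^ 2) * (R ω * sin (Θ ω))} := by
    rw [ofPred_or]
    exact (measurableSet_lt measurable_const (by fun_prop)).union
      (measurableSet_lt measurable_const (by fun_prop))
  rw [exceedanceProb, ← probReal_compl_eq_one_sub hmeas]
  simp only [compl_ofPred, not_or, not_lt]

lemma tendsto_pow_measureReal_le (h : IsSpherical μ R Θ) (hR : IsGumbelTail (upperTail μ R) f)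
    {b ρ : ℕ → ℝ}
    (hb : ∀ n : ℕ, b n = sInf {x | upperTail μ (fun ω => R ω * cos (Θ ω)) x < 1 / (n : ℝ)})
    (hlam : 0 < lam)
    (hHR : Tendsto (fun n => (1 - ρ n) * b n / f (b n)) atTop (𝓝 (2 * lam ^ 2))) (x y : ℝ) :
    Tendsto (fun n => μ.real {ω | R ω * cos (Θ ω) ≤ b n + f (b n) * x ∧
        ρ n * |R ω * cos (Θ ω)| + √(1 - ρ n ^ 2) * (R ω * sin (Θ ω)) ≤ b n + f (b n) * y} ^ n)
      atTop (𝓝 (exp (-huslerReissExponent lam x y) * exp (-exp (-y)))) := by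
  have hp : Tendsto (fun n : ℕ => 1 / (n : ℝ)) atTop (𝓝[>] 0) :=
    tendsto_nhdsWithin_iff.2 ⟨tendsto_one_div_atTop_nhds_zero_nat,
      (eventually_gt_atTop 0).mono fun n hn => by simpa using hn⟩
  have hglb : ∀ᶠ n : ℕ in atTop,
      IsGLB {x | upperTail μ (fun ω => R ω * cos (Θ ω)) x < 1 / (n : ℝ)} (b n) := by
    simp only [hb]
    exact hR.eventually_isGLB_sInf antitone_upperTail h.upperTail_cos_le
      (h.upperTail_cos_pos hR hR.zero_pos) hp
  have hlim := (h.tendsto_exceedanceProb_div_of_isGLB hR hp hglb hlam hHR x y).neg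
  rw [← exp_add, ← neg_add]
  refine (tendsto_one_add_pow_exp_of_tendsto (hlim.congr fun n => ?_)).congr fun n => by
    rw [h.measureReal_le_eq_one_sub_exceedanceProb, sub_eq_add_neg]
  rw [div_div_eq_mul_div, div_one, mul_comm, mul_neg]

end IsSpherical

theorem maxima_half_skew_gumbel_joint_general
    {Ω : Type*} [MeasurableSpace Ω] (μ : Measure Ω) [IsProbabilityMeasure μ]
    (R Θ : Ω → ℝ) (hRm : Measurable R) (hΘm : Measurable Θ)
    (hRnonneg : ∀ᵐ ω ∂μ, 0 ≤ R ω)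
    (hΘunif : μ.map Θ = (ENNReal.ofReal (2 * π))⁻¹ • volume.restrict (Ioo (-π) π))
    (hindep : IndepFun R Θ μ)
    (X Y : Ω → ℝ)
    (hX : X = fun ω => R ω * cos (Θ ω))
    (hY : Y = fun ω => R ω * sin (Θ ω))
    (F G : ℝ → ℝ)
    (hF : F = fun x => (μ {ω | R ω ≤ x}).toReal)
    (hG : G = fun x => (μ {ω | X ω ≤ x}).toReal)
    (w : ℝ → ℝ)
    (hGumbel : ∀ s : ℝ, Tendsto (fun u => (1 - F (u + s / w u)) / (1 - F u))
      (tailFilter fun u => 1 - F u) (𝓝 (exp (-s))))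
    (b a : ℕ → ℝ)
    (hb : ∀ n : ℕ, b n = sInf {x | 1 - 1 / (n : ℝ) < G x})
    (ha : ∀ n : ℕ, a n = 1 / w (b n))
    (ρ : ℕ → ℝ) (lam : ℝ) (hlam : 0 < lam)
    (hHR : Tendsto (fun n : ℕ => (1 - ρ n) * b n / a n) atTop (𝓝 (2 * lam ^ 2))) (x y : ℝ) :
    Tendsto (fun n : ℕ =>
        ((μ {ω | X ω ≤ a n * x + b n ∧
          ρ n * |X ω| + √(1 - ρ n ^ 2) * Y ω ≤ a n * y + b n + a n * log 2}).toReal) ^ n)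
      atTop (𝓝 (exp (-huslerReissExponent lam x (y + log 2)) * exp (-exp (-(y + log 2))))) := by
  subst hX hY
  have h : IsSpherical μ R Θ := ⟨hRm, hΘm, hRnonneg, hΘunif, hindep⟩
  have htailR : (fun u => 1 - F u) = upperTail μ R := by
    simp only [hF, funext (upperTail_eq_one_sub hRm), measureReal_def]
  have hR : IsGumbelTail (upperTail μ R) fun u => 1 / w u :=
    isGumbelTail_upperTail hRnonneg fun s => by
      simpa only [← htailR, mul_one_div] using hGumbel s
  have hXm : Measurable fun ω => R ω * cos (Θ ω) := by fun_prop
  have hquantile (n : ℕ) :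
      b n = sInf {x | upperTail μ (fun ω => R ω * cos (Θ ω)) x < 1 / (n : ℝ)} := by
    simp only [hb, hG, upperTail_eq_one_sub hXm, sub_lt_comm (a := 1) (b := 1 / (n : ℝ)),
      measureReal_def]
  simp only [ha] at hHR ⊢
  refine (h.tendsto_pow_measureReal_le hR hquantile hlam hHR x (y + log 2)).congr fun n => ?_
  rw [add_comm (b n), mul_add, add_comm (b n), add_right_comm, measureReal_def]

theorem maxima_half_skew_gumbel_joint
{Ω : Type*} [MeasurableSpace Ω] (μ : Measure Ω) [IsProbabilityMeasure μ]
    (R Θ : Ω → ℝ) (hRm : Measurable R) (hΘm : Measurable Θ)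
    (hRpos : ∀ᵐ ω ∂μ, 0 < R ω)
    (hΘunif : μ.map Θ = (ENNReal.ofReal (2 * π))⁻¹ • volume.restrict (Ioo (-π) π))
    (hindep : IndepFun R Θ μ)
    (X Y : Ω → ℝ)
    (hX : X = fun ω => R ω * Real.cos (Θ ω))
    (hY : Y = fun ω => R ω * Real.sin (Θ ω))
    (F G : ℝ → ℝ)
    (hF : F = fun x => (μ {ω | R ω ≤ x}).toReal)
    (hG : G = fun x => (μ {ω | X ω ≤ x}).toReal)
    (w : ℝ → ℝ) (hw : ∀ x, 0 < w x)
    (l : Filter ℝ)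
    (hendpoint : (l = atTop ∧ ∀ x, F x < 1) ∨
      (l = nhdsWithin 1 (Iio 1) ∧ (∀ x < 1, F x < 1) ∧ ∀ x, 1 ≤ x → F x = 1))
    (hGumbel : ∀ s : ℝ,
      Tendsto (fun u => (1 - F (u + s / w u)) / (1 - F u)) l (𝓝 (Real.exp (-s))))
    (b a : ℕ → ℝ)
    (hb : ∀ n : ℕ, b n = sInf {x | 1 - 1 / (n : ℝ) < G x})
    (ha : ∀ n : ℕ, a n = 1 / w (b n))
    (ρ : ℕ → ℝ) (hρ : ∀ n, ρ n ∈ Ioc (0 : ℝ) 1)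
    (lam : ℝ) (hlam : 0 < lam)
    (hHR : Tendsto (fun n : ℕ => (1 - ρ n) * b n / a n) atTop (𝓝 (2 * lam ^ 2))) :
    ∀ x y : ℝ,
      Tendsto (fun n : ℕ =>
          ((μ {ω | X ω ≤ a n * x + b n ∧
            ρ n * |X ω| + Real.sqrt (1 - ρ n ^ 2) * Y ω ≤
              a n * y + b n + a n * Real.log 2}).toReal) ^ n)
        atTop (𝓝
          (Real.exp (-(stdNormalCDF (lam + (x - (y + Real.log 2)) / (2 * lam)) *
              Real.exp (-(y + Real.log 2)) +
            stdNormalCDF (lam + ((y + Real.log 2) - x) / (2 * lam)) * Real.exp (-x))) *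
           Real.exp (-Real.exp (-(y + Real.log 2))))) := by
  obtain rfl := eq_tailFilter_one_sub hendpoint
  exact maxima_half_skew_gumbel_joint_general μ R Θ hRm hΘm (hRpos.mono fun _ => le_of_lt) hΘunif
    hindep X Y hX hY F G hF hG w hGumbel b a hb ha ρ lam hlam hHR
end
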